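/- arXiv:1111.2874 — 8 statements merged into one kernel-verified Lean document; each statement's English description precedes it below -/
import Mathlib

section
/- For every integer k ≥ 3 there exists a holomorphic automorphism F of ℂ^k (a bijective holomorphic map with holomorphic inverse) which is tangent to the identity at the origin, i.e. F(0) = 0 and DF(0) = Id, such that its basin of attraction Ω = {p ∈ ℂ^k \ {0} : F^n(p) → 0 as n → ∞} is biholomorphic to (ℂ*)^(k−2) × ℂ², where ℂ* = ℂ \ {0}. -/
/-!
The basin is produced in dimension two and then lifted.

In the plane, the automorphism `G`, a composition of shears and overshears, fixes the line `u = 0`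
pointwise. In the coordinates `ζ = 1 / u`, `w = y / u ^ (3 / 2)` it is close to the translation
`(ζ, w) ↦ (ζ + 1, w)` on the petals `R < Re ζ - |Im ζ|`, `|y| < K |u|`: by `coord_step`, the errors
are dominated by the decrease of `(Re ζ) ^ (-1 / 2)` along the orbit, so they are summable. Every
orbit which tends to the origin off the line `u = 0` enters all the petals with `w` bounded
(`basin_eventually`): the term `1 / u ↦ 1 / u + 1` pushes `ζ` to the right, and then
`y ↦ y - (3 / 2) u y` makes `y / u` bounded. Hence the maps `co ∘ G^[n] - (n, 0)` converge to Fatou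
coordinates `Phi`, holomorphic by the Weierstrass theorem, which conjugate `G` on its basin to the
translation by `(1, 0)`. Deep inside the petals `Phi` is a perturbation of the coordinates `co` with
a small derivative, hence an injective chart with a large image (`exists_chart`). Following orbits
forwards gives the injectivity of `Phi` on the basin, and pulling points back by `G⁻¹` gives its
surjectivity onto `ℂ²`, with holomorphic local sections (`basin_biholomorphic`).

For the lift to `ℂ^(m + 2)` with coordinates `(y, x₀, …, x_m)`, put `u = x₀ ⋯ x_m`. As
`G` multiplies `u` by `exp (-v)` for an entire function `v`, multiplying each `x_i` by
`exp (-v / (m + 1))` defines an automorphism `lift` over `G`; it is tangent to the identity because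
`u` vanishes to second order at the origin when `m ≥ 1`. The quotients `x_i ^ (m + 1) / u` are
invariant, so a point with `u ≠ 0` is attracted to the origin exactly when `(u, y)` is, while points
with `u = 0` are fixed (`mem_basin_iff`). The basin is thus `{(y, x) | (u, y) ∈ basin G}`, and
`(x₁, …, x_m, Phi (u, y))` are coordinates identifying it with `(ℂ*)^m × ℂ²`.
-/

open Filter Set

namespace ParabolicBasin

open Topology Metric

/-! ### Uniform limits of holomorphic maps -/

/-- The Weierstrass theorem for maps between complex Banach spaces. The Schwarz lemma bounds the
derivatives of the differences, so the derivatives converge locally uniformly as well. -/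
theorem differentiableOn_of_tendstoUniformlyOn {E F : Type*} [NormedAddCommGroup E]
    [NormedSpace ℂ E] [NormedAddCommGroup F] [NormedSpace ℂ F] [CompleteSpace F]
    {U : Set E} (hU : IsOpen U) {f : ℕ → E → F} {g : E → F}
    (hf : ∀ n, DifferentiableOn ℂ (f n) U) (hlim : TendstoUniformlyOn f g atTop U) :
    DifferentiableOn ℂ g U := by
  intro x hx
  obtain ⟨r, hr, hball⟩ : ∃ r > 0, ball x (2 * r) ⊆ U := by
    obtain ⟨r, hr, h⟩ := Metric.isOpen_iff.1 hU x hx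
    exact ⟨r / 2, by positivity, by simpa [mul_div_cancel₀] using h⟩
  have hsub : ∀ y ∈ ball x r, ball y r ⊆ U := fun y hy =>
    (ball_subset_ball' (by linarith [mem_ball.1 hy])).trans hball
  have hdiff : ∀ y ∈ U, ∀ n, DifferentiableAt ℂ (f n) y := fun y hy n =>
    (hf n).differentiableAt (hU.mem_nhds hy)
  have hcauchy : UniformCauchySeqOn (fun n => fderiv ℂ (f n)) atTop (ball x r) := by
    rw [Metric.uniformCauchySeqOn_iff]
    intro ε hε
    obtain ⟨N, hN⟩ := Metric.uniformCauchySeqOn_iff.1 hlim.uniformCauchySeqOn (r * ε / 4)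
      (by positivity)
    refine ⟨N, fun m hm n hn y hy => ?_⟩
    have hyU : y ∈ U := hsub y hy (mem_ball_self hr)
    have hmaps : MapsTo (f m - f n) (ball y r)
        (closedBall ((f m - f n) y) (r * ε / 2)) := by
      intro z hz
      have h1 := hN m hm n hn z (hsub y hy hz)
      have h2 := hN m hm n hn y hyU
      rw [dist_eq_norm] at h1 h2
      rw [mem_closedBall, dist_eq_norm]
      calc _ ≤ ‖f m z - f n z‖ + ‖f m y - f n y‖ := norm_sub_le _ _
        _ ≤ _ := by linarith
    have := Complex.norm_fderiv_le_div_of_mapsTo_ball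
      (((hf m).mono (hsub y hy)).sub ((hf n).mono (hsub y hy))) hmaps hr
    rw [fderiv_sub (hdiff y hyU m) (hdiff y hyU n)] at this
    rw [dist_eq_norm]
    refine this.trans_lt ?_
    rw [div_lt_iff₀ hr]
    nlinarith [mul_pos hr hε]
  have hex : ∀ y : E, ∃ L : E →L[ℂ] F, y ∈ ball x r →
      Tendsto (fun n => fderiv ℂ (f n) y) atTop (𝓝 L) := by
    intro y
    by_cases hy : y ∈ ball x r
    · obtain ⟨L, hL⟩ := cauchySeq_tendsto_of_complete (hcauchy.cauchySeq hy)
      exact ⟨L, fun _ => hL⟩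
    · exact ⟨0, fun h => absurd h hy⟩
  choose L hL using hex
  have hunif := hcauchy.tendstoUniformlyOn_of_tendsto hL
  have := hasFDerivAt_of_tendstoUniformlyOn isOpen_ball hunif
    (fun n y hy => (hdiff y (hsub y hy (mem_ball_self hr)) n).hasFDerivAt)
    (fun y hy => hlim.tendsto_at (hsub y hy (mem_ball_self hr))) (mem_ball_self hr)
  exact this.differentiableAt.differentiableWithinAt

/-! ### The planar automorphism and its expansion at the origin -/

/-- The exponent by which the planar automorphism `G` contracts the first coordinate. -/
noncomputable def vexp (p : ℂ × ℂ) : ℂ := p.1 * Complex.exp (-(p.2 + p.1 / 2))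

/-- An automorphism of `ℂ²`, a composition of shears and overshears, which fixes the line
`u = 0` pointwise and satisfies `1 / u ↦ 1 / u + 1 + ⋯`, `y ↦ y - (3 / 2) u y + ⋯` near `0`. -/
noncomputable def G (p : ℂ × ℂ) : ℂ × ℂ :=
  (p.1 * Complex.exp (-vexp p),
    Complex.exp (-(5 / 2 * (p.1 * Complex.exp (-vexp p)))) *
      (p.2 + (p.1 + p.1 * Complex.exp (-vexp p)) / 2 - vexp p))

/-- The value of `vexp` at the preimage of a point under `G`. -/
noncomputable def vinv (p : ℂ × ℂ) : ℂ :=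
  p.1 * Complex.exp (-(Complex.exp (5 / 2 * p.1) * p.2 - p.1 / 2))

/-- The inverse of `G`. -/
noncomputable def Ginv (p : ℂ × ℂ) : ℂ × ℂ :=
  (p.1 * Complex.exp (vinv p),
    Complex.exp (5 / 2 * p.1) * p.2 - p.1 / 2 + vinv p - p.1 * Complex.exp (vinv p) / 2)

theorem vinv_G (p : ℂ × ℂ) : vinv (G p) = vexp p := by
  have h : Complex.exp (5 / 2 * (G p).1) * (G p).2 - (G p).1 / 2
      = p.2 + p.1 / 2 - vexp p := by
    simp only [G]
    rw [← mul_assoc, ← Complex.exp_add, add_neg_cancel, Complex.exp_zero]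
    ring
  rw [vinv, h]
  simp only [G]
  rw [mul_assoc, ← Complex.exp_add, vexp]
  ring_nf

theorem Ginv_G (p : ℂ × ℂ) : Ginv (G p) = p := by
  have h : Complex.exp (5 / 2 * (G p).1) * (G p).2 - (G p).1 / 2
      = p.2 + p.1 / 2 - vexp p := by
    simp only [G]
    rw [← mul_assoc, ← Complex.exp_add, add_neg_cancel, Complex.exp_zero]
    ring
  have h1 : (G p).1 * Complex.exp (vexp p) = p.1 := by
    simp only [G]
    rw [mul_assoc, ← Complex.exp_add, neg_add_cancel, Complex.exp_zero, mul_one]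
  rw [Ginv, vinv_G, h, h1]
  ext <;> simp

theorem vexp_Ginv (p : ℂ × ℂ) : vexp (Ginv p) = vinv p := by
  simp only [vexp, Ginv]
  rw [mul_assoc, ← Complex.exp_add, vinv]
  ring_nf

theorem G_Ginv (p : ℂ × ℂ) : G (Ginv p) = p := by
  have h1 : (Ginv p).1 * Complex.exp (-vinv p) = p.1 := by
    simp only [Ginv]
    rw [mul_assoc, ← Complex.exp_add, add_neg_cancel, Complex.exp_zero, mul_one]
  rw [G, vexp_Ginv, h1]
  ext
  · simp
  · simp only [Ginv]
    have : Complex.exp (-(5 / 2 * p.1)) * Complex.exp (5 / 2 * p.1) = 1 := by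
      rw [← Complex.exp_add, neg_add_cancel, Complex.exp_zero]
    linear_combination p.2 * this

theorem differentiable_vexp : Differentiable ℂ vexp := by
  unfold vexp; fun_prop

theorem differentiable_vinv : Differentiable ℂ vinv := by
  unfold vinv; fun_prop

theorem differentiable_G : Differentiable ℂ G := by
  have := differentiable_vexp
  unfold G; fun_prop

theorem differentiable_Ginv : Differentiable ℂ Ginv := by
  have := differentiable_vinv
  unfold Ginv; fun_prop

theorem inv_G_fst (p : ℂ × ℂ) : (G p).1⁻¹ = p.1⁻¹ * Complex.exp (vexp p) := by
  simp [G, Complex.exp_neg, mul_comm]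

theorem G_fst_ne_zero {p : ℂ × ℂ} (hp : p.1 ≠ 0) : (G p).1 ≠ 0 := by
  simp [G, hp, Complex.exp_ne_zero]

theorem norm_exp_sub_quadratic_le {x : ℂ} (hx : ‖x‖ ≤ 1) :
    ‖Complex.exp x - 1 - x - x ^ 2 / 2‖ ≤ ‖x‖ ^ 3 := by
  have h := Complex.exp_bound hx (n := 3) (by norm_num)
  have e : Complex.exp x - ∑ m ∈ Finset.range 3, x ^ m / (m.factorial : ℂ)
      = Complex.exp x - 1 - x - x ^ 2 / 2 := by
    simp [Finset.sum_range_succ, Nat.factorial]; ring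
  rw [e] at h
  refine h.trans ?_
  have : (0 : ℝ) ≤ ‖x‖ ^ 3 := by positivity
  norm_num [Nat.factorial]
  nlinarith

/-- The expansion of `vexp`: it equals `u (1 - t)` up to third order, where `t = y + u / 2`. -/
theorem vexp_expansion {u y : ℂ} {s : ℝ} (hs : s = ‖u‖ + ‖y‖) (hs1 : s ≤ 1 / 16) :
    ∃ a : ℂ, ‖a‖ ≤ s ^ 2 ∧ vexp (u, y) = u * (1 - (y + u / 2) + a) ∧
      ‖1 - (y + u / 2) + a‖ ≤ 2 ∧ ‖vexp (u, y)‖ ≤ 2 * ‖u‖ ∧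
      ‖vexp (u, y) - u‖ ≤ 2 * ‖u‖ * s := by
  have hu := norm_nonneg u
  have hy := norm_nonneg y
  have ht : ‖y + u / 2‖ ≤ s := by
    calc ‖y + u / 2‖ ≤ ‖y‖ + ‖u / 2‖ := norm_add_le _ _
      _ ≤ s := by simp; linarith
  have ht1 : ‖-(y + u / 2)‖ ≤ 1 := by rw [norm_neg]; linarith
  have ha := Complex.norm_exp_sub_one_sub_id_le ht1
  rw [norm_neg] at ha
  have hs0 : 0 ≤ s := by rw [hs]; positivity
  have ha' : ‖Complex.exp (-(y + u / 2)) - 1 - -(y + u / 2)‖ ≤ s ^ 2 :=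
    ha.trans (by gcongr)
  refine ⟨Complex.exp (-(y + u / 2)) - 1 - -(y + u / 2), ha', ?_, ?_⟩
  · simp only [vexp]; ring
  generalize Complex.exp (-(y + u / 2)) - 1 - -(y + u / 2) = a at ha'
  have he : ‖Complex.exp (-(y + u / 2)) - 1‖ ≤ 2 * s :=
    (Complex.norm_exp_sub_one_le ht1).trans (by rw [norm_neg]; linarith)
  have he2 : ‖Complex.exp (-(y + u / 2))‖ ≤ 2 := by
    calc ‖Complex.exp (-(y + u / 2))‖ = ‖(Complex.exp (-(y + u / 2)) - 1) + 1‖ := by ring_nf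
      _ ≤ ‖Complex.exp (-(y + u / 2)) - 1‖ + ‖(1 : ℂ)‖ := norm_add_le _ _
      _ ≤ 2 := by simp only [norm_one]; linarith
  refine ⟨?_, ?_, ?_⟩
  · calc ‖1 - (y + u / 2) + a‖ ≤ ‖1 - (y + u / 2)‖ + ‖a‖ := norm_add_le _ _
      _ ≤ ‖(1 : ℂ)‖ + ‖y + u / 2‖ + ‖a‖ := by gcongr; exact norm_sub_le _ _
      _ ≤ 2 := by rw [norm_one]; nlinarith
  · simp only [vexp, norm_mul]; nlinarith
  · have : vexp (u, y) - u = u * (Complex.exp (-(y + u / 2)) - 1) := by simp only [vexp]; ring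
    rw [this, norm_mul]; nlinarith

/-- In the coordinate `1 / u`, the map `G` is `1 / u ↦ 1 / u + 1 - y` up to second order. -/
theorem inv_fst_step {u y : ℂ} {s : ℝ} (hs : s = ‖u‖ + ‖y‖) (hs1 : s ≤ 1 / 16) (hu0 : u ≠ 0) :
    ‖(G (u, y)).1⁻¹ - u⁻¹ - 1 + y‖ ≤ 100 * s ^ 2 := by
  obtain ⟨a, ha, hv, he, hv2, hvu⟩ := vexp_expansion hs hs1
  set v := vexp (u, y) with hvdef
  set e := 1 - (y + u / 2) + a with hedef
  have hu := norm_nonneg u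
  have hy := norm_nonneg y
  have hs0 : 0 ≤ s := by rw [hs]; positivity
  have hus : ‖u‖ ≤ s := by linarith
  have hys : ‖y‖ ≤ s := by linarith
  have hb := norm_exp_sub_quadratic_le (x := v) (by linarith)
  set b := Complex.exp v - 1 - v - v ^ 2 / 2 with hbdef
  have hexp : Complex.exp v = 1 + v + v ^ 2 / 2 + b := by rw [hbdef]; ring
  have key : (G (u, y)).1⁻¹ - u⁻¹ - 1 + y = a + u * (e - 1) * (e + 1) / 2 + b / u := by
    rw [inv_G_fst, ← hvdef, hexp, hv, hedef]
    simp only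
    field_simp
    ring
  rw [key]
  have he1 : ‖e - 1‖ ≤ 2 * s := by
    have : e - 1 = a - (y + u / 2) := by rw [hedef]; ring
    rw [this]
    calc _ ≤ ‖a‖ + (‖y‖ + ‖u / 2‖) := (norm_sub_le _ _).trans (by gcongr; exact norm_add_le _ _)
      _ ≤ _ := by simp; nlinarith
  have he2 : ‖e + 1‖ ≤ 3 := (norm_add_le _ _).trans (by rw [norm_one]; linarith)
  have hbu : ‖b / u‖ ≤ 8 * s ^ 2 := by
    rw [norm_div, div_le_iff₀ (norm_pos_iff.2 hu0)]
    have h3 : ‖v‖ ^ 3 ≤ (2 * ‖u‖) ^ 3 := by gcongr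
    have h4 : ‖u‖ ^ 2 ≤ s ^ 2 := by gcongr
    nlinarith
  have hm : ‖u * (e - 1) * (e + 1) / 2‖ ≤ 3 * s ^ 2 := by
    rw [norm_div, norm_mul, norm_mul]
    have : ‖u‖ * ‖e - 1‖ * ‖e + 1‖ ≤ s * (2 * s) * 3 := by gcongr
    simp only [Complex.norm_ofNat]
    nlinarith
  calc _ ≤ ‖a‖ + ‖u * (e - 1) * (e + 1) / 2‖ + ‖b / u‖ :=
        (norm_add_le _ _).trans (by gcongr; exact norm_add_le _ _)
    _ ≤ _ := by nlinarith

/-- After multiplication by the factor `exp (3 v / 2)`, the second coordinate of `G` is `y`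
up to third order, and the error is divisible by `u`. -/
theorem snd_step {u y : ℂ} {s : ℝ} (hs : s = ‖u‖ + ‖y‖) (hs1 : s ≤ 1 / 16) :
    ‖(G (u, y)).2 * Complex.exp (3 / 2 * vexp (u, y)) - y‖ ≤ 1000 * ‖u‖ * s ^ 2 := by
  obtain ⟨a, ha, hv, he, hv2, hvu⟩ := vexp_expansion hs hs1
  set v := vexp (u, y) with hvdef
  have hu := norm_nonneg u
  have hy := norm_nonneg y
  have hs0 : 0 ≤ s := by rw [hs]; positivity
  have hus : ‖u‖ ≤ s := by linarith
  have hys : ‖y‖ ≤ s := by linarith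
  have hv1 : ‖-v‖ ≤ 1 := by rw [norm_neg]; linarith
  have hb := Complex.norm_exp_sub_one_sub_id_le hv1
  rw [norm_neg] at hb
  set b := Complex.exp (-v) - 1 - -v with hbdef
  have hexp : Complex.exp (-v) = 1 - v + b := by rw [hbdef]; ring
  have hb2 : ‖b‖ ≤ 4 * ‖u‖ * s := by
    have : ‖v‖ ^ 2 ≤ (2 * ‖u‖) ^ 2 := by gcongr
    nlinarith
  set U := u * Complex.exp (-v) with hUdef
  -- the remainder of the affine factor
  set r := (u - v) / 2 + b / 2 - a with hrdef
  have hr : ‖r‖ ≤ 8 * s ^ 2 := by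
    calc ‖r‖ ≤ ‖(u - v) / 2‖ + ‖b / 2‖ + ‖a‖ :=
          (norm_sub_le _ _).trans (by gcongr; exact norm_add_le _ _)
      _ ≤ _ := by
          rw [norm_div, norm_div, norm_sub_rev]; simp only [Complex.norm_ofNat]; nlinarith
  have haff : y + (u + U) / 2 - v = y + u * y + u * r := by
    rw [hUdef, hexp, hrdef]
    linear_combination -hv
  have hUu : ‖U - u‖ ≤ 3 * ‖u‖ * s := by
    have h0 : U - u = u * (b - v) := by rw [hUdef, hexp]; ring
    have h1 : ‖b - v‖ ≤ 3 * s := (norm_sub_le _ _).trans (by nlinarith)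
    rw [h0, norm_mul]; nlinarith
  set x := 3 / 2 * v - 5 / 2 * U with hxdef
  have hxu : ‖x + u‖ ≤ 11 * ‖u‖ * s := by
    have h0 : x + u = 3 / 2 * (v - u) - 5 / 2 * (U - u) := by rw [hxdef]; ring
    rw [h0]
    refine (norm_sub_le _ _).trans ?_
    simp only [norm_mul, norm_div, Complex.norm_ofNat]
    nlinarith
  have hxn : ‖x‖ ≤ 2 * ‖u‖ := by
    have h0 : x = (x + u) - u := by ring
    rw [h0]
    refine (norm_sub_le _ _).trans ?_
    nlinarith
  have hc := Complex.norm_exp_sub_one_sub_id_le (x := x) (by linarith)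
  set c := Complex.exp x - 1 - x with hcdef
  have hexpx : Complex.exp x = 1 - u + (x + u + c) := by rw [hcdef]; ring
  have hc2 : ‖x + u + c‖ ≤ 15 * ‖u‖ * s := by
    have : ‖x‖ ^ 2 ≤ (2 * ‖u‖) ^ 2 := by gcongr
    refine (norm_add_le _ _).trans ?_
    nlinarith
  generalize x + u + c = d at hexpx hc2
  have key : (G (u, y)).2 * Complex.exp (3 / 2 * v) - y
      = -(u * (u * y)) + d * (y + u * y + u * r) + (1 - u) * (u * r) := by
    have : (G (u, y)).2 = Complex.exp (-(5 / 2 * U)) * (y + (u + U) / 2 - v) := rfl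
    rw [this, haff, mul_right_comm, ← Complex.exp_add,
      show -(5 / 2 * U) + 3 / 2 * v = x by rw [hxdef]; ring, hexpx]
    ring
  rw [key]
  have h1 : ‖u * (u * y)‖ ≤ ‖u‖ * s ^ 2 := by
    rw [norm_mul, norm_mul]
    have : ‖u‖ * ‖y‖ ≤ s * s := by gcongr
    nlinarith
  have hur : ‖u * r‖ ≤ 8 * ‖u‖ * s ^ 2 := by
    rw [norm_mul]; nlinarith
  have hy2 : ‖y + u * y + u * r‖ ≤ 3 * s := by
    have h3 : ‖u * y‖ ≤ s * s := by rw [norm_mul]; gcongr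
    have h4 : ‖u‖ * s ^ 2 ≤ s * s ^ 2 := by gcongr
    calc _ ≤ ‖y‖ + ‖u * y‖ + ‖u * r‖ := (norm_add_le _ _).trans (by gcongr; exact norm_add_le _ _)
      _ ≤ _ := by nlinarith [mul_nonneg hs0 hs0]
  have h2 : ‖d * (y + u * y + u * r)‖ ≤ 45 * ‖u‖ * s ^ 2 := by
    rw [norm_mul]
    calc _ ≤ (15 * ‖u‖ * s) * (3 * s) := by gcongr
      _ = _ := by ring
  have h3 : ‖(1 - u) * (u * r)‖ ≤ 16 * ‖u‖ * s ^ 2 := by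
    rw [norm_mul]
    have : ‖1 - u‖ ≤ 2 := (norm_sub_le _ _).trans (by rw [norm_one]; linarith)
    calc _ ≤ 2 * (8 * ‖u‖ * s ^ 2) := by gcongr
      _ = _ := by ring
  have h4 : 0 ≤ ‖u‖ * s ^ 2 := by positivity
  calc _ ≤ ‖u * (u * y)‖ + ‖d * (y + u * y + u * r)‖ + ‖(1 - u) * (u * r)‖ := by
        refine (norm_add_le _ _).trans ?_
        gcongr
        exact (norm_add_le _ _).trans (by rw [norm_neg])
    _ ≤ _ := by nlinarith

/-! ### Coordinates near the origin and one step of the dynamics -/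

/-- The branch of `ζ ^ (3 / 2)` on the right half-plane. -/
noncomputable def lam (ζ : ℂ) : ℂ := Complex.exp (3 / 2 * Complex.log ζ)

/-- The aperture function of the sector `|Im ζ| < Re ζ`: the sector with vertex `R` is
`{ζ | R < sec ζ}`. -/
def sec (ζ : ℂ) : ℝ := ζ.re - |ζ.im|

/-- The second coordinate of the petal, `w = y / u ^ (3 / 2)`. -/
noncomputable def wc (p : ℂ × ℂ) : ℂ := p.2 * lam p.1⁻¹

/-- The local petals: `1 / u` lies in a sector with vertex `R`, and `|y| < K |u|`. -/
def petal (K R : ℝ) : Set (ℂ × ℂ) := {p | R < sec p.1⁻¹ ∧ ‖p.2‖ < K * ‖p.1‖}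

/-- The potential `(Re 1 / u) ^ (-1 / 2)`, whose decrease along an orbit controls the errors. -/
noncomputable def rho (p : ℂ × ℂ) : ℝ := 1 / √(p.1⁻¹).re

theorem lam_ne_zero (ζ : ℂ) : lam ζ ≠ 0 := Complex.exp_ne_zero _

theorem norm_lam {ζ : ℂ} (h : ζ ≠ 0) : ‖lam ζ‖ = ‖ζ‖ * √‖ζ‖ := by
  have hpos : 0 < ‖ζ‖ := norm_pos_iff.2 h
  have e : (3 / 2 * Complex.log ζ).re = Real.log ‖ζ‖ + Real.log ‖ζ‖ / 2 := by
    have : (3 / 2 * Complex.log ζ) = ((3 / 2 : ℝ) : ℂ) * Complex.log ζ := by push_cast; ring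
    rw [this, Complex.re_ofReal_mul, Complex.log_re]; ring
  rw [lam, Complex.norm_exp, e, Real.exp_add, Real.exp_log hpos, Real.sqrt_eq_rpow,
    Real.rpow_def_of_pos hpos]
  ring_nf

theorem lam_mul_exp {ζ v : ℂ} (h : 0 < ζ.re) (hv : ‖v‖ ≤ 1) :
    lam (ζ * Complex.exp v) = lam ζ * Complex.exp (3 / 2 * v) := by
  have h0 : ζ ≠ 0 := by rintro rfl; simp at h
  have harg := (Complex.abs_arg_lt_pi_div_two_iff (z := ζ)).2 (Or.inl h)
  rw [abs_lt] at harg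
  have hvi := (Complex.abs_im_le_norm v).trans hv
  rw [abs_le] at hvi
  have hpi := Real.pi_gt_three
  have : Complex.log (ζ * Complex.exp v) = Complex.log ζ + v := by
    conv_lhs => rw [← Complex.exp_log h0, ← Complex.exp_add]
    apply Complex.log_exp
    · rw [Complex.add_im, Complex.log_im]; linarith
    · rw [Complex.add_im, Complex.log_im]; linarith
  rw [lam, this, lam, ← Complex.exp_add]; ring_nf

theorem differentiableAt_lam {ζ : ℂ} (h : 0 < ζ.re) : DifferentiableAt ℂ lam ζ := by
  have : DifferentiableAt ℂ Complex.log ζ := Complex.differentiableAt_log (Or.inl h)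
  unfold lam; fun_prop

theorem sec_le_re (ζ : ℂ) : sec ζ ≤ ζ.re := by
  unfold sec; linarith [abs_nonneg ζ.im]

theorem sec_add_ge (a b : ℂ) : sec a - 2 * ‖b‖ ≤ sec (a + b) := by
  have h1 := Complex.abs_re_le_norm b
  have h2 := Complex.abs_im_le_norm b
  have h3 := abs_add_le a.im b.im
  simp only [sec, Complex.add_re, Complex.add_im]
  linarith [neg_abs_le b.re]

theorem sec_add_real (a : ℂ) (t : ℝ) : sec (a + t) = sec a + t := by
  simp [sec]; ring

theorem inv_drop {x x' : ℝ} (hx : 1 ≤ x) (hx' : x + 1 / 2 ≤ x') :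
    1 / (x * √x) ≤ 8 * (1 / √x - 1 / √x') := by
  have hmono : 1 / √x' ≤ 1 / √(x + 1 / 2) := by
    apply one_div_le_one_div_of_le
    · positivity
    · exact Real.sqrt_le_sqrt hx'
  suffices h : 1 / (x * √x) ≤ 8 * (1 / √x - 1 / √(x + 1 / 2)) by linarith
  have ha : 0 < √x := by positivity
  have hb : 0 < √(x + 1 / 2) := by positivity
  have ha2 : √x ^ 2 = x := Real.sq_sqrt (by linarith)
  have hb2 : √(x + 1 / 2) ^ 2 = x + 1 / 2 := Real.sq_sqrt (by linarith)
  generalize √x = a at *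
  generalize √(x + 1 / 2) = b at *
  subst ha2
  have hba : b ≤ 5 / 4 * a := by nlinarith
  have h1 : (b - a) * (b + a) = 1 / 2 := by nlinarith
  have h2 : b * (a + b) ≤ 4 * a ^ 2 := by nlinarith
  have hsub : 1 / a - 1 / b = (b - a) / (a * b) := by field_simp
  rw [hsub, mul_div_assoc', div_le_div_iff₀ (by positivity)
    (by positivity)]
  have h3 : a * b * (b + a) ≤ 4 * a ^ 3 := by nlinarith
  have h4 : 8 * (b - a) * (a ^ 2 * a) * (b + a) = 4 * a ^ 3 := by
    linear_combination 8 * a ^ 3 * h1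
  have h5 : 0 < b + a := by positivity
  have : 1 * (a * b) * (b + a) ≤ 8 * (b - a) * (a ^ 2 * a) * (b + a) := by rw [h4]; linarith
  exact le_of_mul_le_mul_right this h5

theorem inv_fst_step_quarter {p : ℂ × ℂ} (hs : ‖p.1‖ + ‖p.2‖ ≤ 1 / 20000) (hu : p.1 ≠ 0) :
    ‖(G p).1⁻¹ - p.1⁻¹ - 1‖ ≤ 1 / 8 := by
  have h := inv_fst_step (u := p.1) (y := p.2) rfl (by linarith) hu
  have e : (G p).1⁻¹ - p.1⁻¹ - 1 = ((G p).1⁻¹ - p.1⁻¹ - 1 + p.2) - p.2 := by ring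
  rw [e]
  refine (norm_sub_le _ _).trans ?_
  have := norm_nonneg p.1
  have := norm_nonneg p.2
  have h' : ‖(G p).1⁻¹ - p.1⁻¹ - 1 + p.2‖ ≤ 100 * (‖p.1‖ + ‖p.2‖) ^ 2 := h
  nlinarith

theorem sec_step {p : ℂ × ℂ} (hs : ‖p.1‖ + ‖p.2‖ ≤ 1 / 20000) (hu : p.1 ≠ 0) :
    sec p.1⁻¹ + 1 / 2 ≤ sec (G p).1⁻¹ ∧ (p.1⁻¹).re + 1 / 2 ≤ ((G p).1⁻¹).re := by
  have h := inv_fst_step_quarter hs hu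
  set b := (G p).1⁻¹ - p.1⁻¹ - 1 with hb
  have e : (G p).1⁻¹ = p.1⁻¹ + (1 : ℝ) + b := by rw [hb]; push_cast; ring
  rw [e]
  constructor
  · have := sec_add_ge (p.1⁻¹ + (1 : ℝ)) b
    rw [sec_add_real] at this
    linarith
  · have := (abs_le.1 (Complex.abs_re_le_norm b)).1
    simp only [Complex.add_re, Complex.ofReal_re]
    linarith

/-- For `1 / u` in the sector, the ratio `|y| / |u|` cannot exceed a bound `K ≥ 1` once it is
below it: `u` decays like `1 / n` and `y` like `n ^ (-3 / 2)`. -/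
theorem ratio_step {p : ℂ × ℂ} {K : ℝ} (hK : 1 ≤ K) (hs : ‖p.1‖ + ‖p.2‖ ≤ 1 / 20000)
    (hu : p.1 ≠ 0) (hsec : 0 ≤ sec p.1⁻¹) (hy : ‖p.2‖ ≤ K * ‖p.1‖) :
    ‖(G p).2‖ < K * ‖(G p).1‖ := by
  obtain ⟨u, y⟩ := p
  simp only at hs hu hsec hy
  obtain ⟨a, -, -, -, hv2, hvu⟩ := vexp_expansion (u := u) (y := y) rfl (by linarith)
  have hY := snd_step (u := u) (y := y) rfl (by linarith)
  have hupos : 0 < ‖u‖ := norm_pos_iff.2 hu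
  have hynn := norm_nonneg y
  set v := vexp (u, y) with hv
  set s := ‖u‖ + ‖y‖ with hsdef
  have hure : ‖u‖ / 2 ≤ u.re := by
    have h1 : u⁻¹.re = u.re / ‖u‖ ^ 2 := by rw [Complex.inv_re, Complex.normSq_eq_norm_sq]
    have h2 : ‖u⁻¹‖ ≤ 2 * u⁻¹.re := by
      have := Complex.norm_le_abs_re_add_abs_im u⁻¹
      unfold sec at hsec
      rw [abs_of_nonneg (by linarith [abs_nonneg u⁻¹.im] : (0 : ℝ) ≤ u⁻¹.re)] at this
      linarith
    rw [norm_inv, h1] at h2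
    have h3 : ‖u‖⁻¹ * ‖u‖ ^ 2 ≤ 2 * (u.re / ‖u‖ ^ 2) * ‖u‖ ^ 2 := by gcongr
    field_simp at h3
    linarith
  have hvre : ‖u‖ / 4 ≤ v.re := by
    have := (abs_le.1 (Complex.abs_re_le_norm (v - u))).1
    rw [Complex.sub_re] at this
    nlinarith
  have hUn : ‖(G (u, y)).1‖ = ‖u‖ * Real.exp (-v.re) := by
    simp only [G, norm_mul, Complex.norm_exp, ← hv, Complex.neg_re]
  have hYn : ‖(G (u, y)).2‖ * Real.exp (3 / 2 * v.re) ≤ K * ‖u‖ * (1 + 2000 * s * ‖u‖) := by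
    have e : Real.exp (3 / 2 * v.re) = ‖Complex.exp (3 / 2 * v)‖ := by
      rw [Complex.norm_exp]; congr 1
      have : (3 / 2 * v) = ((3 / 2 : ℝ) : ℂ) * v := by push_cast; ring
      rw [this, Complex.re_ofReal_mul]
    rw [e, ← norm_mul]
    have h1 := norm_le_norm_add_norm_sub' ((G (u, y)).2 * Complex.exp (3 / 2 * v)) y
    have h2 : s ^ 2 ≤ s * (2 * K * ‖u‖) := by
      rw [sq]
      have : s ≤ 2 * K * ‖u‖ := by nlinarith
      gcongr
    nlinarith
  have hexp : 1 + 2000 * s * ‖u‖ < Real.exp (v.re / 2) := by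
    have := Real.add_one_le_exp (v.re / 2)
    nlinarith
  have hfin : ‖(G (u, y)).2‖ * Real.exp (3 / 2 * v.re)
      < K * (‖u‖ * Real.exp (-v.re)) * Real.exp (3 / 2 * v.re) := by
    have e : K * (‖u‖ * Real.exp (-v.re)) * Real.exp (3 / 2 * v.re)
        = K * ‖u‖ * Real.exp (v.re / 2) := by
      rw [mul_assoc, mul_assoc ‖u‖, ← Real.exp_add]; ring_nf
    rw [e]
    exact hYn.trans_lt (by gcongr)
  rw [hUn]
  exact lt_of_mul_lt_mul_right hfin (Real.exp_pos _).le

/-! ### Orbits in a petal -/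

theorem petal_facts {K R : ℝ} (hK : 1 ≤ K) (hR : 20000 * (1 + K) ≤ R) {p : ℂ × ℂ}
    (hp : p ∈ petal K R) :
    p.1 ≠ 0 ∧ ‖p.1‖ + ‖p.2‖ ≤ (1 + K) * ‖p.1‖ ∧ ‖p.1‖ + ‖p.2‖ ≤ 1 / 20000 ∧
      R < (p.1⁻¹).re ∧ (p.1⁻¹).re ≤ ‖p.1⁻¹‖ := by
  obtain ⟨h1, h2⟩ := hp
  have hre : R < (p.1⁻¹).re := h1.trans_le (sec_le_re _)
  have hre' := Complex.re_le_norm p.1⁻¹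
  have hRpos : 0 < R := by linarith
  have h0 : p.1 ≠ 0 := by
    intro h; rw [h] at hre; simp at hre; linarith
  have hpos : 0 < ‖p.1‖ := norm_pos_iff.2 h0
  have hle : (1 + K) * ‖p.1‖ ≤ 1 / 20000 := by
    rw [norm_inv] at hre'
    have : R * ‖p.1‖ ≤ 1 := by
      calc R * ‖p.1‖ ≤ ‖p.1‖⁻¹ * ‖p.1‖ := by gcongr; linarith
        _ = 1 := inv_mul_cancel₀ hpos.ne'
    nlinarith
  exact ⟨h0, by linarith, by linarith, hre, hre'⟩

theorem petal_step {K R : ℝ} (hK : 1 ≤ K) (hR : 20000 * (1 + K) ≤ R) {p : ℂ × ℂ}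
    (hp : p ∈ petal K R) :
    G p ∈ petal K (R + 1 / 2) ∧ (p.1⁻¹).re + 1 / 2 ≤ ((G p).1⁻¹).re := by
  obtain ⟨h0, -, hs, -, -⟩ := petal_facts hK hR hp
  obtain ⟨h1, h2⟩ := sec_step hs h0
  exact ⟨⟨by linarith [hp.1], ratio_step hK hs h0 (by linarith [hp.1]) hp.2.le⟩, h2⟩

theorem petal_mono {K R R' : ℝ} (h : R ≤ R') : petal K R' ⊆ petal K R :=
  fun _ hp => ⟨h.trans_lt hp.1, hp.2⟩

theorem petal_iterate {K R : ℝ} (hK : 1 ≤ K) (hR : 20000 * (1 + K) ≤ R) {p : ℂ × ℂ}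
    (hp : p ∈ petal K R) (n : ℕ) :
    G^[n] p ∈ petal K (R + n / 2) ∧ (p.1⁻¹).re + n / 2 ≤ ((G^[n] p).1⁻¹).re := by
  induction n with
  | zero => simpa using hp
  | succ n ih =>
    rw [Function.iterate_succ_apply']
    have hn : (0 : ℝ) ≤ n := n.cast_nonneg
    obtain ⟨h1, h2⟩ := petal_step hK (by linarith : 20000 * (1 + K) ≤ R + n / 2) ih.1
    push_cast
    exact ⟨petal_mono (by linarith) h1, by linarith [ih.2]⟩

/-- The error in one step of both coordinates, as a drop of the potential `rho`. -/
theorem coord_step {K R : ℝ} (hK : 1 ≤ K) (hR : 20000 * (1 + K) ≤ R) {p : ℂ × ℂ}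
    (hp : p ∈ petal K R) :
    ‖wc (G p) - wc p‖ ≤ 8000 * (1 + K) ^ 2 * (rho p - rho (G p)) ∧
      ‖(G p).1⁻¹ - p.1⁻¹ - 1‖ ≤
        8 * (‖wc p‖ + 100 * (1 + K) ^ 2) * (rho p - rho (G p)) := by
  obtain ⟨h0, hsK, hs, hre, hre'⟩ := petal_facts hK hR hp
  have hstep := (petal_step hK hR hp).2
  have hζ0 : p.1⁻¹ ≠ 0 := inv_ne_zero h0
  have hx1 : 1 ≤ (p.1⁻¹).re := by linarith
  have hdrop : 1 / ((p.1⁻¹).re * √(p.1⁻¹).re) ≤ 8 * (rho p - rho (G p)) := inv_drop hx1 hstep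
  set x := (p.1⁻¹).re with hx
  set z := ‖p.1⁻¹‖ with hz
  have hzpos : 0 < z := by linarith
  have hu : ‖p.1‖ = 1 / z := by rw [hz, norm_inv, one_div, inv_inv]
  have hsq : √z ^ 2 = z := Real.sq_sqrt hzpos.le
  have hsqpos : 0 < √z := Real.sqrt_pos.2 hzpos
  have hsq1 : 1 ≤ √z := Real.one_le_sqrt.2 (by linarith)
  have hzx : 1 / (z * √z) ≤ 1 / (x * √x) := by gcongr
  have hnn := norm_nonneg p.1
  have hs2 : (‖p.1‖ + ‖p.2‖) ^ 2 ≤ ((1 + K) * ‖p.1‖) ^ 2 := by gcongr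
  have hlam : ‖lam p.1⁻¹‖ = z * √z := norm_lam hζ0
  constructor
  · have hv : ‖vexp p‖ ≤ 1 := by
      obtain ⟨a, -, -, -, hv2, -⟩ := vexp_expansion (u := p.1) (y := p.2) rfl (by linarith)
      have : ‖vexp p‖ ≤ 2 * ‖p.1‖ := hv2
      linarith [norm_nonneg p.2]
    have hsnd : ‖(G p).2 * Complex.exp (3 / 2 * vexp p) - p.2‖
        ≤ 1000 * ‖p.1‖ * (‖p.1‖ + ‖p.2‖) ^ 2 := snd_step rfl (by linarith)
    have e : wc (G p) - wc p
        = ((G p).2 * Complex.exp (3 / 2 * vexp p) - p.2) * lam p.1⁻¹ := by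
      rw [wc, wc, inv_G_fst, lam_mul_exp (by linarith) hv]; ring
    rw [e, norm_mul, hlam]
    calc _ ≤ (1000 * ‖p.1‖ * ((1 + K) * ‖p.1‖) ^ 2) * (z * √z) := by
          gcongr; exact hsnd.trans (by gcongr)
      _ = 1000 * (1 + K) ^ 2 * (1 / (z * √z)) := by
          rw [hu]
          generalize √z = t at *
          rw [← hsq]
          field_simp
      _ ≤ 1000 * (1 + K) ^ 2 * (8 * (rho p - rho (G p))) := by
          gcongr; exact hzx.trans hdrop
      _ = _ := by ring
  · have hfst : ‖(G p).1⁻¹ - p.1⁻¹ - 1 + p.2‖ ≤ 100 * (‖p.1‖ + ‖p.2‖) ^ 2 :=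
      inv_fst_step rfl (by linarith) h0
    have e : (G p).1⁻¹ - p.1⁻¹ - 1 = ((G p).1⁻¹ - p.1⁻¹ - 1 + p.2) - p.2 := by ring
    have hy : ‖p.2‖ = ‖wc p‖ * (1 / (z * √z)) := by
      rw [wc, norm_mul, hlam]; field_simp
    have hu2 : ‖p.1‖ ^ 2 ≤ 1 / (z * √z) := by
      rw [hu, div_pow, one_pow]
      apply one_div_le_one_div_of_le (by positivity)
      nlinarith
    rw [e]
    calc _ ≤ 100 * (‖p.1‖ + ‖p.2‖) ^ 2 + ‖p.2‖ := (norm_sub_le _ _).trans (by gcongr)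
      _ ≤ 100 * ((1 + K) ^ 2 * (1 / (z * √z))) + ‖wc p‖ * (1 / (z * √z)) := by
          rw [hy] at hs2 ⊢
          gcongr
          refine hs2.trans ?_
          rw [mul_pow]; gcongr
      _ = (‖wc p‖ + 100 * (1 + K) ^ 2) * (1 / (z * √z)) := by ring
      _ ≤ (‖wc p‖ + 100 * (1 + K) ^ 2) * (8 * (rho p - rho (G p))) := by
          gcongr; exact hzx.trans hdrop
      _ = _ := by ring

theorem rho_nonneg (p : ℂ × ℂ) : 0 ≤ rho p := by unfold rho; positivity

theorem rho_iterate_le {K R : ℝ} (hK : 1 ≤ K) (hR : 20000 * (1 + K) ≤ R) {p : ℂ × ℂ}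
    (hp : p ∈ petal K R) (n : ℕ) : rho (G^[n] p) ≤ 1 / √(R + n / 2) := by
  have h1 := petal_iterate hK hR hp n
  have hpos : 0 < R + n / 2 := by
    have : (0 : ℝ) ≤ n := n.cast_nonneg
    linarith
  have h2 := h1.1.1.trans_le (sec_le_re _)
  exact one_div_le_one_div_of_le (Real.sqrt_pos.2 hpos) (Real.sqrt_le_sqrt h2.le)

theorem petal_iterate_mem {K R : ℝ} (hK : 1 ≤ K) (hR : 20000 * (1 + K) ≤ R) {p : ℂ × ℂ}
    (hp : p ∈ petal K R) (n : ℕ) : G^[n] p ∈ petal K R :=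
  petal_mono (by linarith [(n.cast_nonneg : (0 : ℝ) ≤ n)]) (petal_iterate hK hR hp n).1

theorem wc_iterate_le {K R : ℝ} (hK : 1 ≤ K) (hR : 20000 * (1 + K) ≤ R) {p : ℂ × ℂ}
    (hp : p ∈ petal K R) (n : ℕ) :
    ‖wc (G^[n] p)‖ ≤ ‖wc p‖ + 8000 * (1 + K) ^ 2 := by
  have key : ‖wc (G^[n] p)‖ ≤ ‖wc p‖ + 8000 * (1 + K) ^ 2 * (rho p - rho (G^[n] p)) := by
    induction n with
    | zero => simp
    | succ n ih =>
      rw [Function.iterate_succ_apply']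
      have h := (coord_step hK hR (petal_iterate_mem hK hR hp n)).1
      have := norm_le_norm_add_norm_sub' (wc (G (G^[n] p))) (wc (G^[n] p))
      linarith
  have h0 : rho p ≤ 1 := by
    have h := rho_iterate_le hK hR hp 0
    simp only [Function.iterate_zero, id, Nat.cast_zero, zero_div, add_zero] at h
    refine h.trans ?_
    rw [div_le_one (Real.sqrt_pos.2 (by linarith))]
    exact Real.one_le_sqrt.2 (by linarith)
  have h1 := rho_nonneg (G^[n] p)
  have : 8000 * (1 + K) ^ 2 * (rho p - rho (G^[n] p)) ≤ 8000 * (1 + K) ^ 2 * 1 := by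
    gcongr; linarith
  linarith

/-! ### The Fatou coordinates -/

/-- The local coordinates `(ζ, w) = (1 / u, y / u ^ (3 / 2))` on the petals, in which `G` is close
to the translation `(ζ, w) ↦ (ζ + 1, w)`. -/
noncomputable def co (p : ℂ × ℂ) : ℂ × ℂ := (p.1⁻¹, wc p)

/-- The inverse of the coordinate map `co`. -/
noncomputable def Q (x : ℂ × ℂ) : ℂ × ℂ := (x.1⁻¹, x.2 / lam x.1)

theorem Q_co (p : ℂ × ℂ) : Q (co p) = p := by
  ext <;> simp [Q, co, wc, lam_ne_zero]

theorem co_Q (x : ℂ × ℂ) : co (Q x) = x := by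
  ext <;> simp [Q, co, wc, lam_ne_zero]

/-- The approximations of the Fatou coordinates. -/
noncomputable def phiN (n : ℕ) (p : ℂ × ℂ) : ℂ × ℂ := co (G^[n] p) - ((n : ℂ), 0)

/-- The Fatou coordinates, conjugating `G` on its basin to the translation by `(1, 0)`. -/
noncomputable def Phi (p : ℂ × ℂ) : ℂ × ℂ := limUnder atTop (fun n => phiN n p)

theorem phiN_dist {R : ℝ} (hR : 40000 ≤ R) {p : ℂ × ℂ} (hp : p ∈ petal 1 R) {n m : ℕ}
    (hnm : n ≤ m) :
    dist (phiN n p) (phiN m p) ≤ 8 * (‖wc p‖ + 40000) * (1 / √(R + n / 2)) := by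
  have hR' : (20000 : ℝ) * (1 + 1) ≤ R := by linarith
  have key : dist (phiN n p) (phiN m p)
      ≤ 8 * (‖wc p‖ + 40000) * (rho (G^[n] p) - rho (G^[m] p)) := by
    induction m, hnm using Nat.le_induction with
    | base => simp
    | succ m hm ih =>
      have hmem := petal_iterate_mem le_rfl hR' hp m
      obtain ⟨h1, h2⟩ := coord_step le_rfl hR' hmem
      have hw := wc_iterate_le le_rfl hR' hp m
      have hx := (petal_step le_rfl hR' hmem).2
      have hpos := (petal_facts le_rfl hR' hmem).2.2.2.1
      have hrho : 0 ≤ rho (G^[m] p) - rho (G (G^[m] p)) := by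
        rw [sub_nonneg]
        exact one_div_le_one_div_of_le (Real.sqrt_pos.2 (by linarith))
          (Real.sqrt_le_sqrt (by linarith))
      have hwn := norm_nonneg (wc p)
      have hstep : dist (phiN m p) (phiN (m + 1) p)
          ≤ 8 * (‖wc p‖ + 40000) * (rho (G^[m] p) - rho (G^[m + 1] p)) := by
        rw [Function.iterate_succ_apply', dist_comm, Prod.dist_eq]
        simp only [phiN, co, Function.iterate_succ_apply', Prod.fst_sub, Prod.snd_sub, sub_zero]
        apply max_le
        · rw [dist_eq_norm]
          have e : (G (G^[m] p)).1⁻¹ - ((m + 1 : ℕ) : ℂ) - ((G^[m] p).1⁻¹ - (m : ℂ))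
              = (G (G^[m] p)).1⁻¹ - (G^[m] p).1⁻¹ - 1 := by push_cast; ring
          rw [e]
          refine h2.trans ?_
          gcongr ?_ * _
          linarith
        · rw [dist_eq_norm]
          refine h1.trans ?_
          gcongr ?_ * _
          linarith
      calc _ ≤ _ := dist_triangle _ (phiN m p) _
        _ ≤ _ := add_le_add ih hstep
        _ = _ := by ring
  refine key.trans ?_
  gcongr
  linarith [rho_nonneg (G^[m] p), rho_iterate_le le_rfl hR' hp n]

theorem tendsto_bound (R C : ℝ) :
    Tendsto (fun n : ℕ => C * (1 / √(R + n / 2))) atTop (𝓝 0) := by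
  have h1 : Tendsto (fun n : ℕ => R + (n : ℝ) / 2) atTop atTop :=
    tendsto_atTop_add_const_left _ _
      (tendsto_natCast_atTop_atTop.atTop_div_const (by norm_num))
  have h2 := (Real.tendsto_sqrt_atTop.comp h1).inv_tendsto_atTop.const_mul C
  simpa [Function.comp_def] using h2

theorem phiN_tendsto {R : ℝ} (hR : 40000 ≤ R) {p : ℂ × ℂ} (hp : p ∈ petal 1 R) :
    Tendsto (fun n => phiN n p) atTop (𝓝 (Phi p)) := by
  have : CauchySeq (fun n => phiN n p) := by
    refine cauchySeq_of_le_tendsto_0' (fun n : ℕ => 8 * (‖wc p‖ + 40000) * (1 / √(R + n / 2)))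
      (fun n m hnm => ?_) (tendsto_bound _ _)
    exact phiN_dist hR hp hnm
  exact this.tendsto_limUnder

theorem phiN_dist_Phi {R : ℝ} (hR : 40000 ≤ R) {p : ℂ × ℂ} (hp : p ∈ petal 1 R) (n : ℕ) :
    dist (phiN n p) (Phi p) ≤ 8 * (‖wc p‖ + 40000) * (1 / √(R + n / 2)) := by
  refine le_of_tendsto (tendsto_const_nhds.dist (phiN_tendsto hR hp)) ?_
  filter_upwards [eventually_ge_atTop n] with m hm using phiN_dist hR hp hm

theorem Phi_iterate {R : ℝ} (hR : 40000 ≤ R) {p : ℂ × ℂ} {N : ℕ} (hp : G^[N] p ∈ petal 1 R) :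
    Phi p = Phi (G^[N] p) - ((N : ℂ), 0) := by
  have h := (phiN_tendsto hR hp).sub_const ((N : ℂ), (0 : ℂ))
  have h2 : Tendsto (fun n => phiN (n + N) p) atTop (𝓝 (Phi (G^[N] p) - ((N : ℂ), 0))) := by
    refine h.congr fun n => ?_
    simp only [phiN, Function.iterate_add_apply]
    ext
    · simp; ring
    · simp
  exact ((tendsto_add_atTop_iff_nat N).1 h2).limUnder_eq

/-- The basin of attraction of `G`, away from the line `u = 0` of fixed points. -/
def basin : Set (ℂ × ℂ) := {p | p.1 ≠ 0 ∧ Tendsto (fun n => G^[n] p) atTop (𝓝 0)}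

/-- A domain in the coordinates `co`: `ζ` lies in the sector with vertex `R`, and `|w| < M`. For
`M ^ 2 ≤ R` it is contained in the image of a petal, see `Q_mem_petal`. -/
def dom (R M : ℝ) : Set (ℂ × ℂ) := {x | R < sec x.1 ∧ ‖x.2‖ < M}

theorem Q_mem_petal {R M : ℝ} (hR : 40000 ≤ R) (hMR : M ^ 2 ≤ R) {x : ℂ × ℂ}
    (hx : x ∈ dom R M) : Q x ∈ petal 1 R := by
  obtain ⟨h1, h2⟩ := hx
  have hre := h1.trans_le (sec_le_re _)
  have hz := Complex.re_le_norm x.1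
  have h0 : x.1 ≠ 0 := by intro h; rw [h] at hre; simp at hre; linarith
  refine ⟨by simpa [Q] using h1, ?_⟩
  have hpos : 0 < ‖x.1‖ := norm_pos_iff.2 h0
  have hsq : M ≤ √‖x.1‖ := Real.le_sqrt_of_sq_le (by linarith)
  simp only [Q, norm_div, norm_lam h0, norm_inv, one_mul]
  have hs : 0 < √‖x.1‖ := Real.sqrt_pos.2 hpos
  rw [div_lt_iff₀ (by positivity), ← mul_assoc, inv_mul_cancel₀ hpos.ne', one_mul]
  linarith

theorem petal_subset_basin {R : ℝ} (hR : 40000 ≤ R) : petal 1 R ⊆ basin := by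
  intro p hp
  have hR' : (20000 : ℝ) * (1 + 1) ≤ R := by linarith
  refine ⟨(petal_facts le_rfl hR' hp).1, ?_⟩
  have hlim : Tendsto (fun n : ℕ => (R + (n : ℝ) / 2)⁻¹) atTop (𝓝 0) :=
    (tendsto_atTop_add_const_left _ _
      (tendsto_natCast_atTop_atTop.atTop_div_const (by norm_num))).inv_tendsto_atTop
  refine squeeze_zero_norm (fun n => ?_) hlim
  have hn := (petal_iterate le_rfl hR' hp n).1
  have hre := (hn.1.trans_le (sec_le_re _)).trans_le (Complex.re_le_norm _)
  have hu : ‖(G^[n] p).1‖ ≤ (R + (n : ℝ) / 2)⁻¹ := by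
    rw [norm_inv] at hre
    have := inv_anti₀ (by positivity) hre.le
    rwa [inv_inv] at this
  have hy := hn.2
  rw [one_mul] at hy
  exact max_le hu (hy.le.trans hu)

theorem iterate_fst_ne_zero {p : ℂ × ℂ} (hp : p.1 ≠ 0) (n : ℕ) : (G^[n] p).1 ≠ 0 := by
  induction n with
  | zero => simpa using hp
  | succ n ih => rw [Function.iterate_succ_apply']; exact G_fst_ne_zero ih

/-- Along every orbit of the basin, `ζ` eventually enters each sector and `w` stays bounded. -/
theorem basin_eventually {p : ℂ × ℂ} (hp : p ∈ basin) :
    ∃ M, ∀ R, ∀ᶠ n in atTop, co (G^[n] p) ∈ dom R M := by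
  obtain ⟨hu, hlim⟩ := hp
  have hne := iterate_fst_ne_zero hu
  have hsmall : ∀ᶠ n in atTop, ‖(G^[n] p).1‖ + ‖(G^[n] p).2‖ ≤ 1 / 20000 := by
    have h : Tendsto (fun n => ‖(G^[n] p).1‖ + ‖(G^[n] p).2‖) atTop (𝓝 0) := by
      have h1 := ((continuous_fst.norm.add continuous_snd.norm).tendsto (0 : ℂ × ℂ)).comp hlim
      simpa [Function.comp_def] using h1
    exact h.eventually_le_const (by norm_num)
  obtain ⟨N, hN⟩ := eventually_atTop.1 hsmall
  have hsec : ∀ j : ℕ, sec (G^[N] p).1⁻¹ + j / 2 ≤ sec (G^[N + j] p).1⁻¹ := by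
    intro j
    induction j with
    | zero => simp
    | succ j ih =>
      have h := (sec_step (hN (N + j) (by omega)) (hne _)).1
      rw [← add_assoc, Function.iterate_succ_apply']
      push_cast
      linarith
  have hsecLim : Tendsto (fun j : ℕ => sec (G^[N + j] p).1⁻¹) atTop atTop :=
    tendsto_atTop_mono hsec (tendsto_atTop_add_const_left _ _
      (tendsto_natCast_atTop_atTop.atTop_div_const (by norm_num)))
  obtain ⟨J, hJ⟩ := eventually_atTop.1 (hsecLim.eventually_ge_atTop 0)
  set K := max 1 (‖(G^[N + J] p).2‖ / ‖(G^[N + J] p).1‖) with hK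
  have hK1 : 1 ≤ K := le_max_left _ _
  have hratio : ∀ j ≥ J, ‖(G^[N + j] p).2‖ ≤ K * ‖(G^[N + j] p).1‖ := by
    intro j hj
    induction j, hj using Nat.le_induction with
    | base =>
      rw [← div_le_iff₀ (norm_pos_iff.2 (hne _))]
      exact le_max_right _ _
    | succ j hj ih =>
      rw [← add_assoc, Function.iterate_succ_apply']
      exact (ratio_step hK1 (hN _ (by omega)) (hne _) (hJ j hj) ih).le
  obtain ⟨j, hjJ, hj⟩ := ((eventually_ge_atTop J).and
    (hsecLim.eventually_gt_atTop (20000 * (1 + 2 * K)))).exists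
  set q := G^[N + j] p with hq
  have hmem : q ∈ petal (2 * K) (20000 * (1 + 2 * K)) := by
    refine ⟨hj, (hratio j hjJ).trans_lt ?_⟩
    have := norm_pos_iff.2 (hne (N + j))
    rw [← hq] at this ⊢
    nlinarith
  have hK2 : 1 ≤ 2 * K := by linarith
  refine ⟨‖wc q‖ + 8000 * (1 + 2 * K) ^ 2 + 1, fun R => ?_⟩
  have h1 : ∀ᶠ j in atTop, R < sec (G^[N + j] p).1⁻¹ := hsecLim.eventually_gt_atTop R
  obtain ⟨J', hJ'⟩ := eventually_atTop.1 h1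
  filter_upwards [eventually_ge_atTop (N + J'), eventually_ge_atTop (N + j)] with n hn1 hn2
  obtain ⟨i, rfl⟩ := Nat.exists_eq_add_of_le ((Nat.le_add_right N J').trans hn1)
  obtain ⟨l, rfl⟩ := Nat.exists_eq_add_of_le (Nat.le_of_add_le_add_left hn2)
  refine ⟨hJ' _ (by omega), ?_⟩
  have h2 := wc_iterate_le hK2 le_rfl hmem l
  rw [hq, ← Function.iterate_add_apply, show l + (N + j) = N + (j + l) by ring] at h2
  simp only [co]
  linarith

/-! ### The Fatou coordinates are a biholomorphism from the basin onto `ℂ²` -/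

theorem continuous_sec : Continuous sec := by
  unfold sec; fun_prop

theorem isOpen_dom (R M : ℝ) : IsOpen (dom R M) :=
  (isOpen_lt continuous_const (continuous_sec.comp continuous_fst)).inter
    (isOpen_lt continuous_snd.norm continuous_const)

theorem dom_mono {R R' M M' : ℝ} (hR : R' ≤ R) (hM : M ≤ M') : dom R M ⊆ dom R' M' :=
  fun _ hx => ⟨hR.trans_lt hx.1, hx.2.trans_le hM⟩

theorem convex_dom (R M : ℝ) : Convex ℝ (dom R M) := by
  have h1 : ConcaveOn ℝ univ (fun x : ℂ × ℂ => sec x.1) := by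
    refine ⟨convex_univ, fun x _ y _ a b ha hb hab => ?_⟩
    simp only [sec, Prod.fst_add, Prod.smul_fst, Complex.add_re, Complex.add_im,
      Complex.real_smul, Complex.re_ofReal_mul, Complex.im_ofReal_mul, smul_eq_mul]
    have h := abs_add_le (a * x.1.im) (b * y.1.im)
    rw [abs_mul, abs_mul, abs_of_nonneg ha, abs_of_nonneg hb] at h
    linarith
  have h2 : ConvexOn ℝ univ (fun x : ℂ × ℂ => ‖x.2‖) :=
    (convexOn_univ_norm (E := ℂ)).comp_linearMap (LinearMap.snd ℝ ℂ ℂ)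
  have := (h1.convex_gt R).inter (h2.convex_lt M)
  simpa [dom, Set.inter_def] using this

theorem closedBall_subset_dom {R M : ℝ} {x : ℂ × ℂ} (hx : x ∈ dom (R + 2) M) :
    closedBall x 1 ⊆ dom R (M + 1) := by
  intro z hz
  rw [mem_closedBall, dist_eq_norm] at hz
  have h1 := (norm_fst_le (z - x)).trans hz
  have h2 := (norm_snd_le (z - x)).trans hz
  have h3 := sec_add_ge x.1 (z - x).1
  have h4 := norm_add_le x.2 (z - x).2
  rw [Prod.fst_sub, add_sub_cancel] at h3
  rw [Prod.snd_sub, add_sub_cancel] at h4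
  rw [Prod.fst_sub] at h1
  rw [Prod.snd_sub] at h2
  exact ⟨by linarith [hx.1], by linarith [hx.2]⟩

theorem differentiableAt_co {q : ℂ × ℂ} (h : 0 < (q.1⁻¹).re) : DifferentiableAt ℂ co q := by
  have h0 : q.1 ≠ 0 := by intro h0; simp [h0] at h
  have h1 : DifferentiableAt ℂ (fun q : ℂ × ℂ => q.1⁻¹) q := differentiableAt_fst.inv h0
  have h2 : DifferentiableAt ℂ (fun q : ℂ × ℂ => lam q.1⁻¹) q :=
    DifferentiableAt.comp (g := lam) q (differentiableAt_lam h) h1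
  exact h1.prodMk (differentiableAt_snd.mul h2)

theorem differentiableAt_Q {x : ℂ × ℂ} (h : 0 < x.1.re) : DifferentiableAt ℂ Q x := by
  have h0 : x.1 ≠ 0 := by intro h0; simp [h0] at h
  have h1 : DifferentiableAt ℂ (fun q : ℂ × ℂ => q.1⁻¹) x := differentiableAt_fst.inv h0
  have h2 : DifferentiableAt ℂ (fun q : ℂ × ℂ => lam q.1) x :=
    DifferentiableAt.comp (g := lam) x (differentiableAt_lam h) differentiableAt_fst
  have h3 : lam x.1 ≠ 0 := lam_ne_zero _
  have h4 : DifferentiableAt ℂ (fun q : ℂ × ℂ => q.2 * (lam q.1)⁻¹) x :=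
    differentiableAt_snd.mul (h2.inv h3)
  simp only [← div_eq_mul_inv] at h4
  exact h1.prodMk h4

theorem differentiable_G_iterate (n : ℕ) : Differentiable ℂ G^[n] :=
  differentiable_G.iterate n

theorem differentiableOn_Phi_Q {R M : ℝ} (hR : 40000 ≤ R) (hMR : M ^ 2 ≤ R) :
    DifferentiableOn ℂ (Phi ∘ Q) (dom R M) := by
  refine differentiableOn_of_tendstoUniformlyOn (isOpen_dom R M)
    (f := fun n => phiN n ∘ Q) (fun n x hx => ?_) ?_
  · have hp := petal_iterate_mem le_rfl (by linarith) (Q_mem_petal hR hMR hx) n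
    have hre := hp.1.trans_le (sec_le_re _)
    have hre' := hx.1.trans_le (sec_le_re _)
    have h1 : DifferentiableAt ℂ (co ∘ G^[n] ∘ Q) x :=
      (differentiableAt_co (by simp only [Function.comp_apply]; linarith)).comp x
        ((differentiable_G_iterate n _).comp x (differentiableAt_Q (by linarith)))
    exact (h1.sub_const ((n : ℂ), (0 : ℂ))).differentiableWithinAt
  · rw [Metric.tendstoUniformlyOn_iff]
    intro ε hε
    filter_upwards [(tendsto_bound R (8 * (M + 40000))).eventually_lt_const hε] with n hn x hx
    rw [dist_comm]
    refine (phiN_dist_Phi hR (Q_mem_petal hR hMR hx) n).trans_lt (lt_of_le_of_lt ?_ hn)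
    have : wc (Q x) = x.2 := congrArg Prod.snd (co_Q x)
    rw [this]
    gcongr
    exact hx.2.le

theorem Phi_Q_sub_le {R M : ℝ} (hR : 40000 ≤ R) (hMR : M ^ 2 ≤ R)
    (hMR' : (64 * (M + 40000)) ^ 2 ≤ R) {x : ℂ × ℂ} (hx : x ∈ dom R M) :
    ‖Phi (Q x) - x‖ ≤ 1 / 8 := by
  have h := phiN_dist_Phi hR (Q_mem_petal hR hMR hx) 0
  have hw : wc (Q x) = x.2 := congrArg Prod.snd (co_Q x)
  have h0 : phiN 0 (Q x) = x := by
    simp only [phiN, Function.iterate_zero, id, co_Q]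
    ext <;> simp
  rw [h0, hw, dist_comm, dist_eq_norm] at h
  refine h.trans ?_
  have hs : 64 * (M + 40000) ≤ √R := Real.le_sqrt_of_sq_le hMR'
  have hs0 : 0 < √R := Real.sqrt_pos.2 (by linarith)
  rw [Nat.cast_zero, zero_div, add_zero, mul_one_div, div_le_iff₀ hs0]
  linarith [hx.2]

/-- Deep inside the petals the Fatou coordinates, read in the coordinates `co`, are a small
perturbation of the identity, hence a holomorphic chart whose image contains a similar domain. -/
theorem exists_chart (M : ℝ) :
    ∃ R ≥ (40000 : ℝ), ∃ e : OpenPartialHomeomorph (ℂ × ℂ) (ℂ × ℂ), e.source = dom R M ∧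
      (∀ x, e x = Phi (Q x)) ∧ DifferentiableOn ℂ e (dom R M) ∧
      DifferentiableOn ℂ e.symm e.target ∧ dom (R + 2) (M - 1) ⊆ e.target ∧
      ∀ x ∈ dom R M, Q x ∈ petal 1 R := by
  -- On `dom S (M + 1)` the error `Phi ∘ Q - id` is at most `1 / 8`. Unit balls around the points of
  -- `dom (S + 2) M` lie in that domain, so there the Schwarz lemma bounds the derivative of the error.
  obtain ⟨S, hS⟩ : ∃ S, S = max (max 40000 ((M + 1) ^ 2)) (max (M ^ 2)
    ((64 * (M + 1 + 40000)) ^ 2)) := ⟨_, rfl⟩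
  have hS1 : 40000 ≤ S := hS ▸ (le_max_left _ _).trans (le_max_left _ _)
  have hS2 : (M + 1) ^ 2 ≤ S := hS ▸ (le_max_right _ _).trans (le_max_left _ _)
  have hS3 : M ^ 2 ≤ S := hS ▸ (le_max_left _ _).trans (le_max_right _ _)
  have hS4 : (64 * (M + 1 + 40000)) ^ 2 ≤ S := hS ▸ (le_max_right _ _).trans (le_max_right _ _)
  have hball : ∀ x ∈ dom (S + 2) M, ball x 1 ⊆ dom S (M + 1) := fun x hx =>
    ball_subset_closedBall.trans (closedBall_subset_dom hx)
  have hdH := differentiableOn_Phi_Q hS1 hS2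
  set Er : ℂ × ℂ → ℂ × ℂ := fun x => Phi (Q x) - x with hEr
  have hdE : DifferentiableOn ℂ Er (dom S (M + 1)) := hdH.sub differentiableOn_id
  have hsmall : ∀ x ∈ dom S (M + 1), ‖Er x‖ ≤ 1 / 8 := fun x hx => Phi_Q_sub_le hS1 hS2 hS4 hx
  have hEat : ∀ x ∈ dom (S + 2) M, DifferentiableAt ℂ Er x := fun x hx =>
    hdE.differentiableAt ((isOpen_dom _ _).mem_nhds (hball x hx (mem_ball_self one_pos)))
  have hfd : ∀ x ∈ dom (S + 2) M, ‖fderiv ℂ Er x‖ ≤ 1 / 4 := by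
    intro x hx
    have hmaps : MapsTo Er (ball x 1) (closedBall (Er x) (1 / 4)) := by
      intro z hz
      rw [mem_closedBall, dist_eq_norm]
      have h1 := hsmall z (hball x hx hz)
      have h2 := hsmall x (hball x hx (mem_ball_self one_pos))
      linarith [norm_sub_le (Er z) (Er x)]
    simpa using Complex.norm_fderiv_le_div_of_mapsTo_ball (hdE.mono (hball x hx)) hmaps one_pos
  have happ : ApproximatesLinearOn (Phi ∘ Q)
      ((ContinuousLinearEquiv.refl ℂ (ℂ × ℂ) : (ℂ × ℂ) ≃L[ℂ] (ℂ × ℂ)) : (ℂ × ℂ) →L[ℂ] (ℂ × ℂ))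
      (dom (S + 2) M) (1 / 4) := by
    intro x hx y hy
    have := (convex_dom (S + 2) M).norm_image_sub_le_of_norm_fderiv_le hEat hfd hy hx
    simp only [hEr] at this
    simp only [ContinuousLinearEquiv.coe_refl, ContinuousLinearMap.coe_id', id,
      Function.comp_apply]
    rw [show Phi (Q x) - Phi (Q y) - (x - y) = Phi (Q x) - x - (Phi (Q y) - y) by abel]
    refine this.trans (le_of_eq ?_)
    push_cast
    ring
  have hN : ‖((ContinuousLinearEquiv.refl ℂ (ℂ × ℂ)).symm : (ℂ × ℂ) →L[ℂ] (ℂ × ℂ))‖₊ = 1 := by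
    simp only [ContinuousLinearEquiv.refl_symm, ContinuousLinearEquiv.coe_refl]
    exact nnnorm_one (G := (ℂ × ℂ) →L[ℂ] (ℂ × ℂ))
  have hc : Subsingleton (ℂ × ℂ) ∨ (1 / 4 : NNReal) <
      ‖((ContinuousLinearEquiv.refl ℂ (ℂ × ℂ)).symm : (ℂ × ℂ) →L[ℂ] (ℂ × ℂ))‖₊⁻¹ := by
    right
    rw [hN, inv_one, ← NNReal.coe_lt_coe]
    norm_num
  have hopen := isOpen_dom (S + 2) M
  set e := happ.toOpenPartialHomeomorph (Phi ∘ Q) (dom (S + 2) M) hc hopen with he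
  refine ⟨S + 2, by linarith, e, rfl, fun x => rfl, ?_, ?_, ?_, ?_⟩
  · exact hdH.mono (dom_mono (by linarith) (by linarith))
  · intro a ha
    have hx : e.symm a ∈ dom (S + 2) M := e.map_target ha
    have ht : ‖-fderiv ℂ Er (e.symm a)‖ < 1 := by
      rw [norm_neg]
      linarith [hfd _ hx]
    have hder : HasFDerivAt e
        ((ContinuousLinearEquiv.ofUnit (Units.oneSub _ ht) : (ℂ × ℂ) ≃L[ℂ] (ℂ × ℂ)) :
          (ℂ × ℂ) →L[ℂ] (ℂ × ℂ)) (e.symm a) := by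
      have h1 := (hEat _ hx).hasFDerivAt.add (hasFDerivAt_id (e.symm a))
      have h2 : (Er + id : ℂ × ℂ → ℂ × ℂ) = ⇑e := by
        funext z
        change Phi (Q z) - z + z = Phi (Q z)
        abel
      rw [h2] at h1
      have h3 : ((ContinuousLinearEquiv.ofUnit (Units.oneSub _ ht) : (ℂ × ℂ) ≃L[ℂ] (ℂ × ℂ)) :
          (ℂ × ℂ) →L[ℂ] (ℂ × ℂ))
          = fderiv ℂ Er (e.symm a) + ContinuousLinearMap.id ℂ (ℂ × ℂ) := by
        refine ContinuousLinearMap.ext fun v => ?_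
        change (1 - -fderiv ℂ Er (e.symm a)) v = _
        rw [sub_neg_eq_add, add_comm]
        rfl
      rw [h3]
      exact h1
    exact (e.hasFDerivAt_symm ha hder).differentiableAt.differentiableWithinAt
  · intro b hb
    have hb' : closedBall b 1 ⊆ dom (S + 2) M := by
      simpa using closedBall_subset_dom hb
    refine happ.closedBall_subset_target hc hopen zero_le_one hb' ?_
    rw [hN, mem_closedBall, dist_comm, dist_eq_norm]
    have := hsmall b (dom_mono (by linarith) (by linarith) hb)
    refine this.trans ?_
    push_cast
    norm_num
  · intro x hx
    exact Q_mem_petal (by linarith) (by linarith) hx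

theorem leftInverse_iterate (n : ℕ) : Function.LeftInverse Ginv^[n] G^[n] :=
  Function.LeftInverse.iterate Ginv_G n

theorem rightInverse_iterate (n : ℕ) : Function.RightInverse Ginv^[n] G^[n] :=
  Function.RightInverse.iterate G_Ginv n

theorem mem_basin_of_iterate {p : ℂ × ℂ} {n : ℕ} (h : G^[n] p ∈ basin) : p ∈ basin := by
  refine ⟨fun h0 => h.1 ?_, ?_⟩
  · have : ∀ j : ℕ, (G^[j] p).1 = 0 := by
      intro j
      induction j with
      | zero => simpa using h0
      | succ j ih => rw [Function.iterate_succ_apply']; simp [G, ih]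
    exact this n
  · have := h.2
    simp only [← Function.iterate_add_apply] at this
    exact (tendsto_add_atTop_iff_nat n).1 this

theorem Phi_injOn : InjOn Phi basin := by
  intro p hp p' hp' heq
  obtain ⟨M₁, h₁⟩ := basin_eventually hp
  obtain ⟨M₂, h₂⟩ := basin_eventually hp'
  obtain ⟨R, hR, e, hsrc, he, -, -, -, hpet⟩ := exists_chart (max M₁ M₂)
  obtain ⟨n, hn₁, hn₂⟩ := ((h₁ R).and (h₂ R)).exists
  replace hn₁ := dom_mono le_rfl (le_max_left M₁ M₂) hn₁
  replace hn₂ := dom_mono le_rfl (le_max_right M₁ M₂) hn₂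
  have hq₁ := hpet _ hn₁
  have hq₂ := hpet _ hn₂
  rw [Q_co] at hq₁ hq₂
  rw [Phi_iterate hR hq₁, Phi_iterate hR hq₂] at heq
  have h : e (co (G^[n] p)) = e (co (G^[n] p')) := by
    rw [he, he, Q_co, Q_co]
    exact sub_left_injective heq
  have := e.injOn (hsrc ▸ hn₁) (hsrc ▸ hn₂) h
  have := congrArg Q this
  rw [Q_co, Q_co] at this
  exact (leftInverse_iterate n).injective this

theorem differentiableOn_Phi : DifferentiableOn ℂ Phi basin := by
  intro p hp
  obtain ⟨M, hM⟩ := basin_eventually hp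
  obtain ⟨R, hR, e, hsrc, he, hde, -, -, hpet⟩ := exists_chart M
  obtain ⟨n, hn⟩ := (hM R).exists
  have hre : R < _ := hn.1.trans_le (sec_le_re _)
  have hd : DifferentiableAt ℂ (fun z => co (G^[n] z)) p :=
    (differentiableAt_co (lt_trans (by linarith) hre)).comp p (differentiable_G_iterate n p)
  have hnear := hd.continuousAt.preimage_mem_nhds ((isOpen_dom R M).mem_nhds hn)
  have h1 : DifferentiableAt ℂ (fun z => e (co (G^[n] z)) - ((n : ℂ), (0 : ℂ))) p :=
    ((hde.differentiableAt ((isOpen_dom R M).mem_nhds hn)).comp p hd).sub_const _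
  refine (h1.congr_of_eventuallyEq ?_).differentiableWithinAt
  filter_upwards [hnear] with z hz
  have hz' := hpet _ hz
  rw [Q_co] at hz'
  rw [he, Q_co, Phi_iterate hR hz']

/-- Local holomorphic sections of the Fatou coordinates near every point of `ℂ²`, obtained by
pulling back the charts of `exists_chart` along the translation by `(n, 0)`. -/
theorem exists_section (q : ℂ × ℂ) :
    ∃ σ : ℂ × ℂ → ℂ × ℂ, DifferentiableAt ℂ σ q ∧ ∀ᶠ z in 𝓝 q, σ z ∈ basin ∧ Phi (σ z) = z := by
  obtain ⟨R, hR, e, hsrc, he, -, hds, htgt, hpet⟩ := exists_chart (‖q.2‖ + 2)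
  obtain ⟨n, hn⟩ := exists_nat_gt (R + 2 - sec q.1)
  have hmem : q + ((n : ℂ), (0 : ℂ)) ∈ dom (R + 2) (‖q.2‖ + 2 - 1) := by
    constructor
    · have := sec_add_real q.1 n
      simp only [Prod.fst_add]
      push_cast at this
      linarith
    · simp only [Prod.snd_add, add_zero]
      linarith
  have htr : DifferentiableAt ℂ (fun z : ℂ × ℂ => z + ((n : ℂ), (0 : ℂ))) q := by fun_prop
  have hnear := htr.continuousAt.preimage_mem_nhds ((isOpen_dom _ _).mem_nhds hmem)
  have hsrc' : ∀ z ∈ e.target, e.symm z ∈ dom R (‖q.2‖ + 2) := fun z hz => hsrc ▸ e.map_target hz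
  have hx := hsrc' _ (htgt hmem)
  refine ⟨fun z => Ginv^[n] (Q (e.symm (z + ((n : ℂ), (0 : ℂ))))), ?_, ?_⟩
  · have h1 : DifferentiableAt ℂ (fun z => e.symm (z + ((n : ℂ), (0 : ℂ)))) q :=
      (hds.differentiableAt (e.open_target.mem_nhds (htgt hmem))).comp q htr
    have hre := hx.1.trans_le (sec_le_re _)
    have h2 : DifferentiableAt ℂ (fun z => Q (e.symm (z + ((n : ℂ), (0 : ℂ))))) q :=
      DifferentiableAt.comp (g := Q) q (differentiableAt_Q (lt_trans (by linarith) hre)) h1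
    exact ((differentiable_Ginv.iterate n) _).comp q h2
  · filter_upwards [hnear] with z hz
    have hz' := htgt hz
    have hp := hpet _ (hsrc' _ hz')
    have hr := rightInverse_iterate n (Q (e.symm (z + ((n : ℂ), (0 : ℂ)))))
    have hp' := hp
    rw [← hr] at hp'
    refine ⟨mem_basin_of_iterate (petal_subset_basin hR hp'), ?_⟩
    rw [Phi_iterate hR hp', hr, ← he, e.right_inv hz', add_sub_cancel_right]

/-- The basin of `G` is biholomorphic to `ℂ²`. -/
theorem basin_biholomorphic : ∃ Psi : ℂ × ℂ → ℂ × ℂ, Differentiable ℂ Psi ∧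
    (∀ q, Psi q ∈ basin) ∧ (∀ q, Phi (Psi q) = q) ∧ ∀ p ∈ basin, Psi (Phi p) = p := by
  choose σ hσ hσ' using exists_section
  have hmem : ∀ q, σ q q ∈ basin ∧ Phi (σ q q) = q := fun q => (hσ' q).self_of_nhds
  refine ⟨fun q => σ q q, fun q => ?_, fun q => (hmem q).1, fun q => (hmem q).2,
    fun p hp => Phi_injOn (hmem _).1 hp (hmem _).2⟩
  refine (hσ q).congr_of_eventuallyEq ?_
  filter_upwards [hσ' q] with z hz
  exact Phi_injOn (hmem z).1 hz.1 ((hmem z).2.trans hz.2.symm)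

/-! ### The automorphism of `ℂ^(m + 2)` and its basin -/

section Assembly

variable {m : ℕ}

/-- The projection `(y, x₀, …, x_m) ↦ (u, y)` with `u = x₀ ⋯ x_m`, semiconjugating `lift` to `G`. -/
noncomputable def proj (x : Fin (m + 2) → ℂ) : ℂ × ℂ := (∏ i : Fin (m + 1), x i.succ, x 0)

/-- The lift of `G` to `ℂ^(m + 2)`, which distributes the factor `exp (-vexp)` of the coordinate
`u` evenly among the factors `x₀, …, x_m` of `u`. -/
noncomputable def lift (x : Fin (m + 2) → ℂ) : Fin (m + 2) → ℂ :=
  Matrix.vecCons (G (proj x)).2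
    (fun i : Fin (m + 1) => Complex.exp (-vexp (proj x) / (m + 1)) * x i.succ)

/-- The inverse of `lift`. -/
noncomputable def liftInv (x : Fin (m + 2) → ℂ) : Fin (m + 2) → ℂ :=
  Matrix.vecCons (Ginv (proj x)).2
    (fun i : Fin (m + 1) => Complex.exp (vinv (proj x) / (m + 1)) * x i.succ)

theorem natCast_succ_ne_zero : (m + 1 : ℂ) ≠ 0 := Nat.cast_add_one_ne_zero m

theorem exp_div_pow (v : ℂ) : Complex.exp (v / (m + 1)) ^ (m + 1) = Complex.exp v := by
  rw [← Complex.exp_nat_mul]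
  congr 1
  push_cast
  field_simp [natCast_succ_ne_zero (m := m)]

theorem proj_lift (x : Fin (m + 2) → ℂ) : proj (lift x) = G (proj x) := by
  refine Prod.ext ?_ rfl
  simp only [proj, lift, Matrix.cons_val_succ, Finset.prod_mul_distrib, Finset.prod_const,
    Finset.card_univ, Fintype.card_fin, exp_div_pow, G]
  ring

theorem proj_liftInv (x : Fin (m + 2) → ℂ) : proj (liftInv x) = Ginv (proj x) := by
  refine Prod.ext ?_ rfl
  simp only [proj, liftInv, Matrix.cons_val_succ, Finset.prod_mul_distrib, Finset.prod_const,
    Finset.card_univ, Fintype.card_fin, exp_div_pow, Ginv]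
  ring

theorem liftInv_lift (x : Fin (m + 2) → ℂ) : liftInv (lift x) = x := by
  funext i
  refine Fin.cases ?_ (fun i => ?_) i
  · simp only [liftInv, Matrix.cons_val_zero, proj_lift, Ginv_G]
    rfl
  · simp only [liftInv, lift, Matrix.cons_val_succ]
    rw [← lift, proj_lift, vinv_G, ← mul_assoc, ← Complex.exp_add, ← add_div, add_neg_cancel,
      zero_div, Complex.exp_zero, one_mul]

theorem lift_liftInv (x : Fin (m + 2) → ℂ) : lift (liftInv x) = x := by
  funext i
  refine Fin.cases ?_ (fun i => ?_) i
  · simp only [lift, Matrix.cons_val_zero, proj_liftInv, G_Ginv]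
    rfl
  · simp only [liftInv, lift, Matrix.cons_val_succ]
    rw [← liftInv, proj_liftInv, vexp_Ginv, ← mul_assoc, ← Complex.exp_add, ← add_div,
      neg_add_cancel, zero_div, Complex.exp_zero, one_mul]

theorem differentiable_proj : Differentiable ℂ (proj : (Fin (m + 2) → ℂ) → ℂ × ℂ) := by
  unfold proj; fun_prop

theorem differentiable_lift : Differentiable ℂ (lift : (Fin (m + 2) → ℂ) → _) := by
  have h1 := (differentiable_proj (m := m))
  have h2 := differentiable_G.comp h1
  have h3 := differentiable_vexp.comp h1
  simp only [Function.comp_def] at h2 h3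
  refine differentiable_pi.2 fun i => ?_
  refine Fin.cases ?_ (fun i => ?_) i
  · exact h2.snd
  · simp only [lift, Matrix.cons_val_succ]
    fun_prop

theorem differentiable_liftInv : Differentiable ℂ (liftInv : (Fin (m + 2) → ℂ) → _) := by
  have h1 := (differentiable_proj (m := m))
  have h2 := differentiable_Ginv.comp h1
  have h3 := differentiable_vinv.comp h1
  simp only [Function.comp_def] at h2 h3
  refine differentiable_pi.2 fun i => ?_
  refine Fin.cases ?_ (fun i => ?_) i
  · exact h2.snd
  · simp only [liftInv, Matrix.cons_val_succ]
    fun_prop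

theorem proj_zero : proj (0 : Fin (m + 2) → ℂ) = 0 := by
  simp [proj]

/-- Points over the line `u = 0` are fixed. -/
theorem lift_eq_self {x : Fin (m + 2) → ℂ} (h : (proj x).1 = 0) : lift x = x := by
  have hv : vexp (proj x) = 0 := by simp [vexp, h]
  funext i
  refine Fin.cases ?_ (fun i => ?_) i
  · simp only [lift, Matrix.cons_val_zero, G, hv, h]
    simp [proj]
  · simp [lift, hv]

theorem hasFDerivAt_mul_flat {E : Type*} [NormedAddCommGroup E] [NormedSpace ℂ E]
    {a b : E → ℂ} {L : E →L[ℂ] ℂ} (ha : DifferentiableAt ℂ a 0) (ha0 : a 0 = 1)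
    (hb : HasFDerivAt b L 0) (hb0 : b 0 = 0) : HasFDerivAt (fun x => a x * b x) L 0 := by
  have := ha.hasFDerivAt.mul hb
  have e : a 0 • L + b 0 • fderiv ℂ a 0 = L := by
    ext v
    simp [ha0, hb0]
  rw [e] at this
  exact this

theorem hasFDerivAt_mul_zero {E : Type*} [NormedAddCommGroup E] [NormedSpace ℂ E]
    {a b : E → ℂ} (ha : DifferentiableAt ℂ a 0)
    (hb : HasFDerivAt b (0 : E →L[ℂ] ℂ) 0) (hb0 : b 0 = 0) :
    HasFDerivAt (fun x => b x * a x) (0 : E →L[ℂ] ℂ) 0 := by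
  have := hb.mul ha.hasFDerivAt
  have e : b 0 • fderiv ℂ a 0 + a 0 • (0 : E →L[ℂ] ℂ) = 0 := by
    ext v
    simp [hb0]
  rw [e] at this
  exact this

/-- As `u` is a product of at least two coordinates, it vanishes to second order at the origin. -/
theorem hasFDerivAt_proj_fst (hm : 1 ≤ m) :
    HasFDerivAt (fun x : Fin (m + 2) → ℂ => (proj x).1) (0 : (Fin (m + 2) → ℂ) →L[ℂ] ℂ) 0 := by
  have h1 : HasFDerivAt (fun x : Fin (m + 2) → ℂ => x (Fin.succ 0))
      (ContinuousLinearMap.proj (Fin.succ 0) : (Fin (m + 2) → ℂ) →L[ℂ] ℂ) 0 :=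
    hasFDerivAt_apply _ _
  have h2 : Differentiable ℂ
      (fun x : Fin (m + 2) → ℂ => ∏ i : Fin m, x i.succ.succ) := by fun_prop
  have h3 := h1.mul (h2 0).hasFDerivAt
  have h4 : ∏ i : Fin m, (0 : Fin (m + 2) → ℂ) i.succ.succ = 0 :=
    Finset.prod_eq_zero (Finset.mem_univ ⟨0, hm⟩) rfl
  have h5 : ∀ L L' : (Fin (m + 2) → ℂ) →L[ℂ] ℂ,
      (0 : Fin (m + 2) → ℂ) (Fin.succ 0) • L
        + (∏ i : Fin m, (0 : Fin (m + 2) → ℂ) i.succ.succ) • L' = 0 := by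
    intro L L'
    rw [h4]
    ext v
    simp
  rw [h5] at h3
  refine h3.congr_of_eventuallyEq (Eventually.of_forall fun x => ?_)
  simp only [proj, Fin.prod_univ_succ, Pi.mul_apply]

theorem hasFDerivAt_lift (hm : 1 ≤ m) :
    HasFDerivAt lift (ContinuousLinearMap.id ℂ (Fin (m + 2) → ℂ)) 0 := by
  have hu := hasFDerivAt_proj_fst hm
  have hp := differentiable_proj (m := m)
  have hp1 : Differentiable ℂ (fun x : Fin (m + 2) → ℂ => (proj x).1) := hp.fst
  have hu0 : (proj (0 : Fin (m + 2) → ℂ)).1 = 0 := by rw [proj_zero]; rfl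
  have hv : Differentiable ℂ (fun x : Fin (m + 2) → ℂ => vexp (proj x)) :=
    differentiable_vexp.comp hp
  have hE : Differentiable ℂ (fun x : Fin (m + 2) → ℂ => Complex.exp (-vexp (proj x))) :=
    hv.neg.cexp
  have hv0 : vexp (proj (0 : Fin (m + 2) → ℂ)) = 0 := by simp [vexp, hu0]
  have hdv : HasFDerivAt (fun x : Fin (m + 2) → ℂ => vexp (proj x))
      (0 : (Fin (m + 2) → ℂ) →L[ℂ] ℂ) 0 := by
    have hp2 : Differentiable ℂ (fun x : Fin (m + 2) → ℂ => (proj x).2) := hp.snd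
    exact hasFDerivAt_mul_zero
      (a := fun x : Fin (m + 2) → ℂ => Complex.exp (-((proj x).2 + (proj x).1 / 2)))
      (by fun_prop) hu hu0
  have hdU : HasFDerivAt (fun x : Fin (m + 2) → ℂ => (proj x).1 * Complex.exp (-vexp (proj x)))
      (0 : (Fin (m + 2) → ℂ) →L[ℂ] ℂ) 0 :=
    hasFDerivAt_mul_zero (hE 0) hu hu0
  refine hasFDerivAt_pi'.2 fun i => ?_
  refine Fin.cases ?_ (fun i => ?_) i
  · have hy : HasFDerivAt (fun x : Fin (m + 2) → ℂ => x 0)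
        (ContinuousLinearMap.proj 0 : (Fin (m + 2) → ℂ) →L[ℂ] ℂ) 0 := hasFDerivAt_apply _ _
    have hB := (hy.add ((hu.add hdU).mul_const (2⁻¹ : ℂ))).sub hdv
    have hL : (ContinuousLinearMap.proj 0 : (Fin (m + 2) → ℂ) →L[ℂ] ℂ)
        + (2⁻¹ : ℂ) • ((0 : (Fin (m + 2) → ℂ) →L[ℂ] ℂ) + 0) - 0
        = ContinuousLinearMap.proj 0 := by
      ext v
      simp
    rw [hL] at hB
    exact hasFDerivAt_mul_flat (L := ContinuousLinearMap.proj 0)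
      (a := fun x : Fin (m + 2) → ℂ =>
        Complex.exp (-(5 / 2 * ((proj x).1 * Complex.exp (-vexp (proj x))))))
      (b := fun x : Fin (m + 2) → ℂ =>
        x 0 + ((proj x).1 + (proj x).1 * Complex.exp (-vexp (proj x))) / 2 - vexp (proj x))
      (by fun_prop) (by simp [hu0])
      (hB.congr_of_eventuallyEq (Eventually.of_forall fun x => by
        simp only [Pi.add_apply, Pi.sub_apply, div_eq_mul_inv]))
      (by simp [hu0, hv0])
  · simp only [lift, Matrix.cons_val_succ]
    exact hasFDerivAt_mul_flat
      (L := (ContinuousLinearMap.proj i.succ : (Fin (m + 2) → ℂ) →L[ℂ] ℂ))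
      (a := fun x : Fin (m + 2) → ℂ => Complex.exp (-vexp (proj x) / (m + 1)))
      (b := fun x : Fin (m + 2) → ℂ => x i.succ)
      (by simp only [div_eq_mul_inv]; exact ((hv 0).neg.mul_const _).cexp)
      (by simp [hv0]) (hasFDerivAt_apply _ _) rfl

theorem proj_lift_iterate (n : ℕ) (x : Fin (m + 2) → ℂ) :
    proj (lift^[n] x) = G^[n] (proj x) :=
  Function.Semiconj.iterate_right (f := proj) (ga := lift) (gb := G) proj_lift n x

/-- The quotients `x_i ^ (m + 1) / u` are invariant. -/
theorem lift_iterate_pow (n : ℕ) (x : Fin (m + 2) → ℂ) (i : Fin (m + 1)) :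
    (lift^[n] x) i.succ ^ (m + 1) * (proj x).1
      = x i.succ ^ (m + 1) * (G^[n] (proj x)).1 := by
  induction n with
  | zero => simp
  | succ n ih =>
    rw [Function.iterate_succ_apply', Function.iterate_succ_apply', ← proj_lift_iterate] at *
    simp only [lift, Matrix.cons_val_succ, mul_pow, exp_div_pow, G]
    linear_combination Complex.exp (-vexp (proj (lift^[n] x))) * ih

theorem tendsto_zero_of_pow {z : ℕ → ℂ} (h : Tendsto (fun n => z n ^ (m + 1)) atTop (𝓝 0)) :
    Tendsto z atTop (𝓝 0) := by
  rw [tendsto_zero_iff_norm_tendsto_zero] at h ⊢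
  have h1 := h.rpow_const (p := ((m + 1 : ℕ) : ℝ)⁻¹) (Or.inr (by positivity))
  rw [Real.zero_rpow (by positivity)] at h1
  refine h1.congr fun n => ?_
  rw [norm_pow, Real.pow_rpow_inv_natCast (norm_nonneg _) (by omega)]

theorem mem_basin_iff (p : Fin (m + 2) → ℂ) :
    (p ≠ 0 ∧ Tendsto (fun n => lift^[n] p) atTop (𝓝 0)) ↔ proj p ∈ basin := by
  constructor
  · rintro ⟨hp, hlim⟩
    refine ⟨fun h0 => hp ?_, ?_⟩
    · have hfix : ∀ n : ℕ, lift^[n] p = p := fun n =>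
        Function.iterate_fixed (lift_eq_self h0) n
      simp only [hfix] at hlim
      exact tendsto_nhds_unique tendsto_const_nhds hlim
    · have h := ((differentiable_proj (m := m)).continuous.tendsto 0).comp hlim
      rw [proj_zero] at h
      exact h.congr fun n => proj_lift_iterate n p
  · rintro ⟨hu, hlim⟩
    refine ⟨?_, tendsto_pi_nhds.2 fun i => ?_⟩
    · rintro rfl
      exact hu (by rw [proj_zero]; rfl)
    · refine Fin.cases ?_ (fun i => ?_) i
      · have h := (continuous_snd.tendsto (0 : ℂ × ℂ)).comp hlim
        exact h.congr fun n => congrArg Prod.snd (proj_lift_iterate n p).symm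
      · refine tendsto_zero_of_pow (m := m) ?_
        have h := ((continuous_fst.tendsto (0 : ℂ × ℂ)).comp hlim).const_mul
          (p i.succ ^ (m + 1) / (proj p).1)
        rw [Prod.fst_zero, mul_zero] at h
        refine h.congr fun n => ?_
        have := lift_iterate_pow n p i
        simp only [Function.comp_apply]
        field_simp
        linear_combination -this

/-- The biholomorphism from the basin of `lift` onto `(ℂ*)^m × ℂ²`. -/
noncomputable def toModel (p : Fin (m + 2) → ℂ) : (Fin m → ℂ) × ℂ × ℂ :=
  (fun i => p i.succ.succ, Phi (proj p))

/-- The inverse of `toModel`, built from the inverse `Psi` of the Fatou coordinates: the first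
factor of `u` is recovered from `u` and the other factors. -/
noncomputable def ofModel (Psi : ℂ × ℂ → ℂ × ℂ) (q : (Fin m → ℂ) × ℂ × ℂ) : Fin (m + 2) → ℂ :=
  Matrix.vecCons (Psi q.2).2 (Matrix.vecCons ((Psi q.2).1 / ∏ i, q.1 i) q.1)

theorem proj_ofModel (Psi : ℂ × ℂ → ℂ × ℂ) {q : (Fin m → ℂ) × ℂ × ℂ} (hq : ∀ i, q.1 i ≠ 0) :
    proj (ofModel Psi q) = Psi q.2 := by
  refine Prod.ext ?_ rfl
  simp only [proj, ofModel, Matrix.cons_val_succ, Fin.prod_univ_succ, Matrix.cons_val_zero]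
  exact div_mul_cancel₀ _ (Finset.prod_ne_zero_iff.2 fun i _ => hq i)

theorem exists_automorphism (hm : 1 ≤ m) :
    ∃ F : (Fin (m + 2) → ℂ) → (Fin (m + 2) → ℂ),
      Differentiable ℂ F ∧ Function.Bijective F ∧
      (∃ Finv : (Fin (m + 2) → ℂ) → (Fin (m + 2) → ℂ), Differentiable ℂ Finv ∧
        Function.LeftInverse Finv F ∧ Function.RightInverse Finv F) ∧
      F 0 = 0 ∧ fderiv ℂ F 0 = ContinuousLinearMap.id ℂ (Fin (m + 2) → ℂ) ∧
      (∃ (Φ : (Fin (m + 2) → ℂ) → (Fin m → ℂ) × ℂ × ℂ)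
         (Ψ : (Fin m → ℂ) × ℂ × ℂ → (Fin (m + 2) → ℂ)),
        DifferentiableOn ℂ Φ
          {p : Fin (m + 2) → ℂ | p ≠ 0 ∧ Tendsto (fun n => F^[n] p) atTop (nhds 0)} ∧
        DifferentiableOn ℂ Ψ {q : (Fin m → ℂ) × ℂ × ℂ | ∀ i, q.1 i ≠ 0} ∧
        Set.BijOn Φ
          {p : Fin (m + 2) → ℂ | p ≠ 0 ∧ Tendsto (fun n => F^[n] p) atTop (nhds 0)}
          {q : (Fin m → ℂ) × ℂ × ℂ | ∀ i, q.1 i ≠ 0} ∧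
        (∀ p ∈ {p : Fin (m + 2) → ℂ | p ≠ 0 ∧ Tendsto (fun n => F^[n] p) atTop (nhds 0)},
          Ψ (Φ p) = p) ∧
        (∀ q ∈ {q : (Fin m → ℂ) × ℂ × ℂ | ∀ i, q.1 i ≠ 0}, Φ (Ψ q) = q)) := by
  obtain ⟨Psi, hPsi, hmem, hright, hleft⟩ := basin_biholomorphic
  refine ⟨lift, differentiable_lift,
    ⟨Function.LeftInverse.injective liftInv_lift, Function.RightInverse.surjective lift_liftInv⟩,
    ⟨liftInv, differentiable_liftInv, liftInv_lift, lift_liftInv⟩,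
    lift_eq_self (by rw [proj_zero]; rfl), (hasFDerivAt_lift hm).fderiv,
    toModel, ofModel Psi, ?_⟩
  simp only [mem_basin_iff]
  have hne : ∀ p : Fin (m + 2) → ℂ, proj p ∈ basin → ∀ i : Fin (m + 1), p i.succ ≠ 0 := by
    intro p hp i
    have h : ∏ i : Fin (m + 1), p i.succ ≠ 0 := hp.1
    exact Finset.prod_ne_zero_iff.1 h i (Finset.mem_univ i)
  have hinv : ∀ p ∈ {p : Fin (m + 2) → ℂ | proj p ∈ basin}, ofModel Psi (toModel p) = p := by
    intro p hp
    have h := hleft _ hp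
    funext i
    refine Fin.cases ?_ (fun i => ?_) i
    · simp only [ofModel, toModel, Matrix.cons_val_zero, h]
      rfl
    · refine Fin.cases ?_ (fun i => ?_) i
      · simp only [ofModel, toModel, Matrix.cons_val_zero, Matrix.cons_val_succ, h]
        simp only [proj, Fin.prod_univ_succ]
        exact mul_div_cancel_right₀ _
          (Finset.prod_ne_zero_iff.2 fun (i : Fin m) _ => hne p hp i.succ)
      · simp only [ofModel, toModel, Matrix.cons_val_succ]
  have hinv' : ∀ q ∈ {q : (Fin m → ℂ) × ℂ × ℂ | ∀ i, q.1 i ≠ 0},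
      toModel (ofModel Psi q) = q := by
    intro q hq
    refine Prod.ext rfl ?_
    simp only [toModel, proj_ofModel Psi hq, hright]
  refine ⟨?_, ?_, ⟨?_, ?_, ?_⟩, hinv, hinv'⟩
  · refine DifferentiableOn.prodMk (by fun_prop) ?_
    exact differentiableOn_Phi.comp differentiable_proj.differentiableOn fun p hp => hp
  · intro q hq
    have h0 : ∏ i, q.1 i ≠ 0 := Finset.prod_ne_zero_iff.2 fun i _ => hq i
    have h1 : DifferentiableAt ℂ (fun q : (Fin m → ℂ) × ℂ × ℂ => Psi q.2) q :=
      (hPsi q.2).comp q differentiableAt_snd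
    have h2 : DifferentiableAt ℂ (fun q : (Fin m → ℂ) × ℂ × ℂ => ∏ i, q.1 i) q := by fun_prop
    refine (differentiableAt_pi.2 fun i => ?_).differentiableWithinAt
    refine Fin.cases ?_ (fun i => ?_) i
    · exact h1.snd
    · refine Fin.cases ?_ (fun i => ?_) i
      · simp only [ofModel, Matrix.cons_val_succ, Matrix.cons_val_zero, div_eq_mul_inv]
        exact h1.fst.mul (h2.inv h0)
      · simp only [ofModel, Matrix.cons_val_succ]
        fun_prop
  · exact fun p hp i => hne p hp i.succ
  · intro p hp p' hp' h
    rw [← hinv p hp, h, hinv p' hp']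
  · intro q hq
    refine ⟨ofModel Psi q, ?_, hinv' q hq⟩
    rw [mem_ofPred_eq, proj_ofModel Psi hq]
    exact hmem _

end Assembly

end ParabolicBasin

/-- For every integer `k ≥ 3` there exists a holomorphic automorphism `F` of
`ℂ^k` tangent to the identity at the origin whose basin of attraction
`Ω = {p ≠ 0 : F^[n] p → 0}` is biholomorphic to `(ℂ*)^(k-2) × ℂ²`. -/
theorem exists_automorphism_basin_biholomorphic (k : ℕ) (hk : 3 ≤ k) :
    ∃ F : (Fin k → ℂ) → (Fin k → ℂ),
      -- `F` is a holomorphic automorphism of `ℂ^k`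
      Differentiable ℂ F ∧ Function.Bijective F ∧
      (∃ Finv : (Fin k → ℂ) → (Fin k → ℂ), Differentiable ℂ Finv ∧
        Function.LeftInverse Finv F ∧ Function.RightInverse Finv F) ∧
      -- `F` is tangent to the identity at the origin
      F 0 = 0 ∧ fderiv ℂ F 0 = ContinuousLinearMap.id ℂ (Fin k → ℂ) ∧
      -- the basin of attraction is biholomorphic to `(ℂ*)^(k-2) × ℂ²`
      (∃ (Φ : (Fin k → ℂ) → (Fin (k - 2) → ℂ) × ℂ × ℂ)
         (Ψ : (Fin (k - 2) → ℂ) × ℂ × ℂ → (Fin k → ℂ)),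
        DifferentiableOn ℂ Φ
          {p : Fin k → ℂ | p ≠ 0 ∧ Tendsto (fun n => F^[n] p) atTop (nhds 0)} ∧
        DifferentiableOn ℂ Ψ {q : (Fin (k - 2) → ℂ) × ℂ × ℂ | ∀ i, q.1 i ≠ 0} ∧
        Set.BijOn Φ
          {p : Fin k → ℂ | p ≠ 0 ∧ Tendsto (fun n => F^[n] p) atTop (nhds 0)}
          {q : (Fin (k - 2) → ℂ) × ℂ × ℂ | ∀ i, q.1 i ≠ 0} ∧
        (∀ p ∈ {p : Fin k → ℂ | p ≠ 0 ∧ Tendsto (fun n => F^[n] p) atTop (nhds 0)},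
          Ψ (Φ p) = p) ∧
        (∀ q ∈ {q : (Fin (k - 2) → ℂ) × ℂ × ℂ | ∀ i, q.1 i ≠ 0}, Φ (Ψ q) = q)) := by
  obtain ⟨m, rfl⟩ : ∃ m, k = m + 2 := ⟨k - 2, by omega⟩
  exact ParabolicBasin.exists_automorphism (by omega)
end

section
/- For any nonzero complex numbers a, b, c, the map F = φ₃ ∘ φ₂⁻¹ ∘ φ₁⁻¹ ∘ φ₂ ∘ φ₁ is a holomorphic automorphism of ℂ³ tangent to the identity at the origin (F(0) = 0 and DF(0) = Id), and there exist entire functions h₁,…,h₇ : ℂ³ → ℂ such that, writing ζ = z·t, the components of F = (F₁, F₂, F₃) satisfy: F₁(z,t,w) = z·(1 − aζ + ζ²·h₁(z,t,w) + ζw·h₂(z,t,w)), F₂(z,t,w) = t·(1 − bζ + ζ²·h₃(z,t,w) + ζw·h₄(z,t,w)), and F₃(z,t,w) = w·(1 − cζ + ζ²·h₅(z,t,w) + ζw·h₆(z,t,w)) + ζ³·h₇(z,t,w). -/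
/-!
Writing `ζ = zt`, `s = a + b`, `E = exp (s (w - ζ))` and `P = exp (-sζE)`, the composition is

* `F₁ = z exp (-aζE)`, `F₂ = t exp (-bζE)`,
* `F₃ = (w + ζ (E - 1)) exp (-(s + c) ζ P) + s ζ² P²`.

The required forms come from Taylor's formula for `exp` with entire remainders:
`exp x = 1 + x * expQuot x` and `expQuot x = 1 + x * expQuot₂ x`, where both quotients are
iterated `dslope`s. The term `(a + b) z² t²` in `φ₃` is what cancels the pure `ζ²` term of
`ζ (E - 1)`, leaving only `ζ³` outside the multiples of `w`.

Each of the five factors is entire, is bijective with an entire inverse, fixes the origin and has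
derivative the identity there; all these properties pass to the composition.
-/

open Filter Set

/-- The shear `φ₁(z,t,w) = (z, t, w − zt)`. -/
noncomputable def φ₁ (p : ℂ × ℂ × ℂ) : ℂ × ℂ × ℂ :=
  (p.1, p.2.1, p.2.2 - p.1 * p.2.1)

/-- The inverse shear `φ₁⁻¹(z,t,w) = (z, t, w + zt)`. -/
noncomputable def φ₁inv (p : ℂ × ℂ × ℂ) : ℂ × ℂ × ℂ :=
  (p.1, p.2.1, p.2.2 + p.1 * p.2.1)

/-- The overshear `φ₂(z,t,w) = (z·e^{aw}, t·e^{bw}, w)`. -/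
noncomputable def φ₂ (a b : ℂ) (p : ℂ × ℂ × ℂ) : ℂ × ℂ × ℂ :=
  (p.1 * Complex.exp (a * p.2.2), p.2.1 * Complex.exp (b * p.2.2), p.2.2)

/-- The inverse overshear `φ₂⁻¹(z,t,w) = (z·e^{−aw}, t·e^{−bw}, w)`. -/
noncomputable def φ₂inv (a b : ℂ) (p : ℂ × ℂ × ℂ) : ℂ × ℂ × ℂ :=
  (p.1 * Complex.exp (-(a * p.2.2)), p.2.1 * Complex.exp (-(b * p.2.2)), p.2.2)

/-- The overshear `φ₃(z,t,w) = (z, t, w·e^{−(a+b+c)zt} + (a+b)z²t²)`. -/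
noncomputable def φ₃ (a b c : ℂ) (p : ℂ × ℂ × ℂ) : ℂ × ℂ × ℂ :=
  (p.1, p.2.1,
    p.2.2 * Complex.exp (-((a + b + c) * p.1 * p.2.1)) + (a + b) * p.1 ^ 2 * p.2.1 ^ 2)

/-- The automorphism `F = φ₃ ∘ φ₂⁻¹ ∘ φ₁⁻¹ ∘ φ₂ ∘ φ₁` of `ℂ³`. -/
noncomputable def Fmap (a b c : ℂ) : ℂ × ℂ × ℂ → ℂ × ℂ × ℂ :=
  φ₃ a b c ∘ φ₂inv a b ∘ φ₁inv ∘ φ₂ a b ∘ φ₁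

/-- The projection `π(z,t,w) = (zt, w)`. -/
def πmap (p : ℂ × ℂ × ℂ) : ℂ × ℂ := (p.1 * p.2.1, p.2.2)

/-- The basin of attraction `Ω = {p ∈ ℂ³ \ {0} : F^[n] p → 0}` of `F`. -/
noncomputable def basinF (a b c : ℂ) : Set (ℂ × ℂ × ℂ) :=
  {p | p ≠ 0 ∧ Tendsto (fun n => (Fmap a b c)^[n] p) atTop (nhds 0)}

/-- The basin of attraction `Ω̃ = {q ∈ ℂ² \ {0} : G^[n] q → 0}` of a map `G : ℂ² → ℂ²`. -/
noncomputable def basinG (G : ℂ × ℂ → ℂ × ℂ) : Set (ℂ × ℂ) :=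
  {q | q ≠ 0 ∧ Tendsto (fun n => G^[n] q) atTop (nhds 0)}

/-- The entire function `(exp x - 1) / x`, with value `1` at `0`. -/
noncomputable def expQuot : ℂ → ℂ := dslope Complex.exp 0

/-- The entire function `(exp x - 1 - x) / x²`, with its removable singularity at `0` filled. -/
noncomputable def expQuot₂ : ℂ → ℂ := dslope expQuot 0

lemma differentiable_dslope_zero {f : ℂ → ℂ} (hf : Differentiable ℂ f) :
    Differentiable ℂ (dslope f 0) := by
  rw [← differentiableOn_univ] at hf ⊢
  exact (Complex.differentiableOn_dslope Filter.univ_mem).2 hf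

@[fun_prop]
lemma differentiable_expQuot : Differentiable ℂ expQuot :=
  differentiable_dslope_zero Complex.differentiable_exp

@[fun_prop]
lemma differentiable_expQuot₂ : Differentiable ℂ expQuot₂ :=
  differentiable_dslope_zero differentiable_expQuot

lemma exp_eq_expQuot (x : ℂ) : Complex.exp x = 1 + x * expQuot x := by
  have h := sub_smul_dslope Complex.exp 0 x
  simp only [sub_zero, smul_eq_mul, Complex.exp_zero] at h
  rw [expQuot, h]; ring

lemma expQuot_eq (x : ℂ) : expQuot x = 1 + x * expQuot₂ x := by
  have h := sub_smul_dslope expQuot 0 x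
  have h0 : expQuot 0 = 1 := by simp [expQuot, dslope_same]
  simp only [sub_zero, smul_eq_mul, h0] at h
  rw [expQuot₂, h]; ring

lemma exp_eq_expQuot₂ (x : ℂ) : Complex.exp x = 1 + x + x ^ 2 * expQuot₂ x := by
  rw [exp_eq_expQuot, expQuot_eq]; ring

/-- The inverse of `φ₃`; it exists because `φ₃` preserves `z` and `t`. -/
noncomputable def φ₃inv (a b c : ℂ) (p : ℂ × ℂ × ℂ) : ℂ × ℂ × ℂ :=
  (p.1, p.2.1,
    (p.2.2 - (a + b) * p.1 ^ 2 * p.2.1 ^ 2) * Complex.exp ((a + b + c) * p.1 * p.2.1))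

lemma φ₁inv_φ₁ (p : ℂ × ℂ × ℂ) : φ₁inv (φ₁ p) = p := by simp [φ₁, φ₁inv]

lemma φ₁_φ₁inv (p : ℂ × ℂ × ℂ) : φ₁ (φ₁inv p) = p := by simp [φ₁, φ₁inv]

lemma φ₂inv_φ₂ (a b : ℂ) (p : ℂ × ℂ × ℂ) : φ₂inv a b (φ₂ a b p) = p := by
  simp [φ₂, φ₂inv, mul_assoc, ← Complex.exp_add]

lemma φ₂_φ₂inv (a b : ℂ) (p : ℂ × ℂ × ℂ) : φ₂ a b (φ₂inv a b p) = p := by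
  simp [φ₂, φ₂inv, mul_assoc, ← Complex.exp_add]

lemma φ₃inv_φ₃ (a b c : ℂ) (p : ℂ × ℂ × ℂ) : φ₃inv a b c (φ₃ a b c p) = p := by
  simp [φ₃, φ₃inv, mul_assoc, ← Complex.exp_add]

lemma φ₃_φ₃inv (a b c : ℂ) (p : ℂ × ℂ × ℂ) : φ₃ a b c (φ₃inv a b c p) = p := by
  simp [φ₃, φ₃inv, mul_assoc, ← Complex.exp_add]

/-- The inverse of `Fmap`, composed of the inverses of its factors. -/
noncomputable def Fmapinv (a b c : ℂ) : ℂ × ℂ × ℂ → ℂ × ℂ × ℂ :=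
  φ₁inv ∘ φ₂inv a b ∘ φ₁ ∘ φ₂ a b ∘ φ₃inv a b c

lemma Fmapinv_leftInverse (a b c : ℂ) : Function.LeftInverse (Fmapinv a b c) (Fmap a b c) := by
  intro p
  simp [Fmap, Fmapinv, φ₁inv_φ₁, φ₁_φ₁inv, φ₂inv_φ₂, φ₂_φ₂inv, φ₃inv_φ₃]

lemma Fmapinv_rightInverse (a b c : ℂ) : Function.RightInverse (Fmapinv a b c) (Fmap a b c) := by
  intro p
  simp [Fmap, Fmapinv, φ₁inv_φ₁, φ₁_φ₁inv, φ₂inv_φ₂, φ₂_φ₂inv, φ₃_φ₃inv]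

lemma differentiable_φ₁ : Differentiable ℂ φ₁ := by unfold φ₁; fun_prop

lemma differentiable_φ₁inv : Differentiable ℂ φ₁inv := by unfold φ₁inv; fun_prop

lemma differentiable_φ₂ (a b : ℂ) : Differentiable ℂ (φ₂ a b) := by unfold φ₂; fun_prop

lemma differentiable_φ₂inv (a b : ℂ) : Differentiable ℂ (φ₂inv a b) := by
  unfold φ₂inv; fun_prop

lemma differentiable_φ₃ (a b c : ℂ) : Differentiable ℂ (φ₃ a b c) := by unfold φ₃; fun_prop

lemma differentiable_φ₃inv (a b c : ℂ) : Differentiable ℂ (φ₃inv a b c) := by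
  unfold φ₃inv; fun_prop

lemma differentiable_Fmap (a b c : ℂ) : Differentiable ℂ (Fmap a b c) :=
  (differentiable_φ₃ a b c).comp ((differentiable_φ₂inv a b).comp
    (differentiable_φ₁inv.comp ((differentiable_φ₂ a b).comp differentiable_φ₁)))

lemma differentiable_Fmapinv (a b c : ℂ) : Differentiable ℂ (Fmapinv a b c) :=
  differentiable_φ₁inv.comp ((differentiable_φ₂inv a b).comp
    (differentiable_φ₁.comp ((differentiable_φ₂ a b).comp (differentiable_φ₃inv a b c))))

/-- A product `f * g` with `f 0 = 0` and `g 0 = 1` has the same derivative at `0` as `f`. -/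
lemma hasFDerivAt_mul_of_eq_one {f g : ℂ × ℂ × ℂ → ℂ} {f' : ℂ × ℂ × ℂ →L[ℂ] ℂ}
    (hf : HasFDerivAt f f' 0) (hg : Differentiable ℂ g) (hf0 : f 0 = 0) (hg0 : g 0 = 1) :
    HasFDerivAt (fun p => f p * g p) f' 0 := by
  have h := hf.mul (hg 0).hasFDerivAt
  rw [hf0, hg0] at h
  refine h.congr_fderiv (ContinuousLinearMap.ext fun v => ?_)
  simp

/-- A product `f * g` with `f 0 = g 0 = 0` has vanishing derivative at `0`. -/
lemma hasFDerivAt_mul_of_eq_zero {f g : ℂ × ℂ × ℂ → ℂ}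
    (hf : Differentiable ℂ f) (hg : Differentiable ℂ g) (hf0 : f 0 = 0) (hg0 : g 0 = 0) :
    HasFDerivAt (fun p => f p * g p) (0 : ℂ × ℂ × ℂ →L[ℂ] ℂ) 0 := by
  have h := (hf 0).hasFDerivAt.mul (hg 0).hasFDerivAt
  rw [hf0, hg0] at h
  refine h.congr_fderiv (ContinuousLinearMap.ext fun v => ?_)
  simp

/-- A map whose three components have the coordinate projections as derivatives at `0` has
derivative the identity there. -/
lemma hasFDerivAt_id_of_components {f g h : ℂ × ℂ × ℂ → ℂ}
    (hf : HasFDerivAt f (ContinuousLinearMap.fst ℂ ℂ (ℂ × ℂ)) 0)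
    (hg : HasFDerivAt g
      ((ContinuousLinearMap.fst ℂ ℂ ℂ).comp (ContinuousLinearMap.snd ℂ ℂ (ℂ × ℂ))) 0)
    (hh : HasFDerivAt h
      ((ContinuousLinearMap.snd ℂ ℂ ℂ).comp (ContinuousLinearMap.snd ℂ ℂ (ℂ × ℂ))) 0) :
    HasFDerivAt (fun p => (f p, g p, h p)) (ContinuousLinearMap.id ℂ (ℂ × ℂ × ℂ)) 0 :=
  hf.prodMk (hg.prodMk hh)

lemma hasFDerivAt_coord₁ : HasFDerivAt (fun p : ℂ × ℂ × ℂ => p.1)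
    (ContinuousLinearMap.fst ℂ ℂ (ℂ × ℂ)) 0 := hasFDerivAt_fst

lemma hasFDerivAt_coord₂ : HasFDerivAt (fun p : ℂ × ℂ × ℂ => p.2.1)
    ((ContinuousLinearMap.fst ℂ ℂ ℂ).comp (ContinuousLinearMap.snd ℂ ℂ (ℂ × ℂ))) 0 :=
  hasFDerivAt_snd.fst

lemma hasFDerivAt_coord₃ : HasFDerivAt (fun p : ℂ × ℂ × ℂ => p.2.2)
    ((ContinuousLinearMap.snd ℂ ℂ ℂ).comp (ContinuousLinearMap.snd ℂ ℂ (ℂ × ℂ))) 0 :=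
  hasFDerivAt_snd.snd

lemma hasFDerivAt_φ₁ : HasFDerivAt φ₁ (ContinuousLinearMap.id ℂ (ℂ × ℂ × ℂ)) 0 := by
  refine hasFDerivAt_id_of_components hasFDerivAt_coord₁ hasFDerivAt_coord₂ ?_
  have h := hasFDerivAt_coord₃.sub (hasFDerivAt_mul_of_eq_zero (f := fun p => p.1)
    (g := fun p => p.2.1) (by fun_prop) (by fun_prop) rfl rfl)
  rwa [sub_zero] at h

lemma hasFDerivAt_φ₁inv : HasFDerivAt φ₁inv (ContinuousLinearMap.id ℂ (ℂ × ℂ × ℂ)) 0 := by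
  refine hasFDerivAt_id_of_components hasFDerivAt_coord₁ hasFDerivAt_coord₂ ?_
  have h := hasFDerivAt_coord₃.add (hasFDerivAt_mul_of_eq_zero (f := fun p => p.1)
    (g := fun p => p.2.1) (by fun_prop) (by fun_prop) rfl rfl)
  rwa [add_zero] at h

lemma hasFDerivAt_φ₂ (a b : ℂ) :
    HasFDerivAt (φ₂ a b) (ContinuousLinearMap.id ℂ (ℂ × ℂ × ℂ)) 0 :=
  hasFDerivAt_id_of_components
    (hasFDerivAt_mul_of_eq_one hasFDerivAt_coord₁ (by fun_prop) rfl (by simp))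
    (hasFDerivAt_mul_of_eq_one hasFDerivAt_coord₂ (by fun_prop) rfl (by simp))
    hasFDerivAt_coord₃

lemma hasFDerivAt_φ₂inv (a b : ℂ) :
    HasFDerivAt (φ₂inv a b) (ContinuousLinearMap.id ℂ (ℂ × ℂ × ℂ)) 0 :=
  hasFDerivAt_id_of_components
    (hasFDerivAt_mul_of_eq_one hasFDerivAt_coord₁ (by fun_prop) rfl (by simp))
    (hasFDerivAt_mul_of_eq_one hasFDerivAt_coord₂ (by fun_prop) rfl (by simp))
    hasFDerivAt_coord₃

lemma hasFDerivAt_φ₃ (a b c : ℂ) :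
    HasFDerivAt (φ₃ a b c) (ContinuousLinearMap.id ℂ (ℂ × ℂ × ℂ)) 0 := by
  refine hasFDerivAt_id_of_components hasFDerivAt_coord₁ hasFDerivAt_coord₂ ?_
  have h := (hasFDerivAt_mul_of_eq_one hasFDerivAt_coord₃
    (g := fun p => Complex.exp (-((a + b + c) * p.1 * p.2.1))) (by fun_prop) rfl (by simp)).add
    (hasFDerivAt_mul_of_eq_zero (f := fun p => (a + b) * p.1 ^ 2)
      (g := fun p => p.2.1 ^ 2) (by fun_prop) (by fun_prop) (by simp) (by simp))
  rwa [add_zero] at h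

lemma hasFDerivAt_Fmap (a b c : ℂ) :
    HasFDerivAt (Fmap a b c) (ContinuousLinearMap.id ℂ (ℂ × ℂ × ℂ)) 0 := by
  have e₁ : φ₁ 0 = 0 := by simp [φ₁]
  have e₂ : φ₂ a b 0 = 0 := by simp [φ₂]
  have e₃ : φ₁inv 0 = 0 := by simp [φ₁inv]
  have e₄ : φ₂inv a b 0 = 0 := by simp [φ₂inv]
  have k₂ : HasFDerivAt (φ₂ a b ∘ φ₁) (ContinuousLinearMap.id ℂ (ℂ × ℂ × ℂ)) 0 :=
    HasFDerivAt.comp 0 (by rw [e₁]; exact hasFDerivAt_φ₂ a b) hasFDerivAt_φ₁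
  have k₃ : HasFDerivAt (φ₁inv ∘ φ₂ a b ∘ φ₁) (ContinuousLinearMap.id ℂ (ℂ × ℂ × ℂ)) 0 :=
    HasFDerivAt.comp 0 (by simp only [Function.comp, e₁, e₂]; exact hasFDerivAt_φ₁inv) k₂
  have k₄ : HasFDerivAt (φ₂inv a b ∘ φ₁inv ∘ φ₂ a b ∘ φ₁)
      (ContinuousLinearMap.id ℂ (ℂ × ℂ × ℂ)) 0 :=
    HasFDerivAt.comp 0
      (by simp only [Function.comp, e₁, e₂, e₃]; exact hasFDerivAt_φ₂inv a b) k₃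
  exact HasFDerivAt.comp 0
    (by simp only [Function.comp, e₁, e₂, e₃, e₄]; exact hasFDerivAt_φ₃ a b c) k₄

/-- The closed form of `Fmap`, with `E = exp ((a + b) (w - zt))` and `P = exp (-(a + b) zt E)`. -/
lemma Fmap_eq (a b c z t w E P : ℂ) (hE : E = Complex.exp ((a + b) * (w - z * t)))
    (hP : P = Complex.exp (-((a + b) * (z * t) * E))) :
    Fmap a b c (z, t, w) =
      (z * Complex.exp (-(a * (z * t) * E)), t * Complex.exp (-(b * (z * t) * E)),
        (w + z * t * (E - 1)) * Complex.exp (-((a + b + c) * (z * t) * P)) +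
          (a + b) * (z * t) ^ 2 * P ^ 2) := by
  have hE' : Complex.exp (a * (w - z * t)) * Complex.exp (b * (w - z * t)) = E := by
    rw [hE, ← Complex.exp_add]; ring_nf
  have h3 : w - z * t + z * Complex.exp (a * (w - z * t)) * (t * Complex.exp (b * (w - z * t))) =
      w + z * t * (E - 1) := by
    linear_combination (z * t) * hE'
  have h1 (d : ℂ) : Complex.exp (d * (w - z * t)) * Complex.exp (-(d * (w + z * t * (E - 1)))) =
      Complex.exp (-(d * (z * t) * E)) := by
    rw [← Complex.exp_add]; ring_nf
  have hP' : Complex.exp (-(a * (z * t) * E)) * Complex.exp (-(b * (z * t) * E)) = P := by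
    rw [hP, ← Complex.exp_add]; ring_nf
  simp only [Fmap, Function.comp, φ₁, φ₂, φ₁inv, φ₂inv, φ₃, h3]
  rw [mul_assoc z, mul_assoc t, h1, h1]
  refine Prod.ext rfl (Prod.ext rfl ?_)
  simp only
  rw [← hP']
  ring_nf

/-- The form of the first two components, for `d = a` and `d = b`. -/
lemma exp_component_form (d s ζ w : ℂ) :
    Complex.exp (-(d * ζ * Complex.exp (s * (w - ζ)))) =
      1 - d * ζ + ζ ^ 2 * (d * s * expQuot (s * (w - ζ)) +
        d ^ 2 * Complex.exp (s * (w - ζ)) ^ 2 *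
          expQuot₂ (-(d * ζ * Complex.exp (s * (w - ζ))))) +
        ζ * w * (-(d * s * expQuot (s * (w - ζ)))) := by
  rw [exp_eq_expQuot₂ (-(d * ζ * Complex.exp (s * (w - ζ))))]
  linear_combination (-(d * ζ)) * exp_eq_expQuot (s * (w - ζ))

/-- The algebra behind the form of the third component. It is applied with `g` the value of
`expQuot₂` at `s (w - ζ)`, `P = exp (-sζE)` and `Q = exp (-(s + c) ζ P)`; the pure `ζ²` terms
cancel. -/
lemma third_component_form (s c ζ w E g P P₁ Q Q₂ : ℂ)
    (hE : E = 1 + s * (w - ζ) + (s * (w - ζ)) ^ 2 * g)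
    (hP : P = 1 + ζ * P₁) (hQ : Q = 1 - (s + c) * ζ + ζ ^ 2 * Q₂) :
    (w + ζ * (E - 1)) * Q + s * ζ ^ 2 * P ^ 2 =
      w * (1 - c * ζ + ζ ^ 2 * (Q₂ - s * (s + c) + s * ζ * Q₂ - 2 * s ^ 2 * g * Q) +
        ζ * w * (s ^ 2 * g * Q)) +
      ζ ^ 3 * (s * (2 * P₁ + ζ * P₁ ^ 2 + (s + c) - ζ * Q₂ + s * g * Q)) := by
  subst hE hP hQ
  ring

/-- For nonzero `a, b, c`, the map `F = φ₃ ∘ φ₂⁻¹ ∘ φ₁⁻¹ ∘ φ₂ ∘ φ₁` is a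
holomorphic automorphism of `ℂ³` tangent to the identity at the origin, and its components
have the form `F₁ = z(1 − aζ + O(ζ², ζw))`, `F₂ = t(1 − bζ + O(ζ², ζw))`,
`F₃ = w(1 − cζ + O(ζ², ζw)) + O(ζ³)` with `ζ = zt`. -/
theorem Fmap_form (a b c : ℂ) (ha : a ≠ 0) (hb : b ≠ 0) (hc : c ≠ 0) :
    Differentiable ℂ (Fmap a b c) ∧ Function.Bijective (Fmap a b c) ∧
    (∃ Finv : ℂ × ℂ × ℂ → ℂ × ℂ × ℂ, Differentiable ℂ Finv ∧
      Function.LeftInverse Finv (Fmap a b c) ∧ Function.RightInverse Finv (Fmap a b c)) ∧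
    Fmap a b c 0 = 0 ∧
    fderiv ℂ (Fmap a b c) 0 = ContinuousLinearMap.id ℂ (ℂ × ℂ × ℂ) ∧
    ∃ h₁ h₂ h₃ h₄ h₅ h₆ h₇ : ℂ × ℂ × ℂ → ℂ,
      Differentiable ℂ h₁ ∧ Differentiable ℂ h₂ ∧ Differentiable ℂ h₃ ∧
      Differentiable ℂ h₄ ∧ Differentiable ℂ h₅ ∧ Differentiable ℂ h₆ ∧
      Differentiable ℂ h₇ ∧
      ∀ z t w : ℂ,
        Fmap a b c (z, t, w) =
          (z * (1 - a * (z * t) + (z * t) ^ 2 * h₁ (z, t, w) +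
              (z * t) * w * h₂ (z, t, w)),
           t * (1 - b * (z * t) + (z * t) ^ 2 * h₃ (z, t, w) +
              (z * t) * w * h₄ (z, t, w)),
           w * (1 - c * (z * t) + (z * t) ^ 2 * h₅ (z, t, w) +
              (z * t) * w * h₆ (z, t, w)) + (z * t) ^ 3 * h₇ (z, t, w)) := by
  refine ⟨differentiable_Fmap a b c,
    ⟨(Fmapinv_leftInverse a b c).injective, (Fmapinv_rightInverse a b c).surjective⟩,
    ⟨Fmapinv a b c, differentiable_Fmapinv a b c, Fmapinv_leftInverse a b c,
      Fmapinv_rightInverse a b c⟩,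
    by simp [Fmap, φ₁, φ₂, φ₁inv, φ₂inv, φ₃], (hasFDerivAt_Fmap a b c).fderiv, ?_⟩
  -- `u`, `E`, `P`, `P₁`, `Q`, `Q₂` are the entire functions of the closed form, with
  -- `P = 1 + ζ P₁` and `Q = exp (-(a+b+c) ζ P) = 1 - (a+b+c) ζ + ζ² Q₂`.
  let ζ : ℂ × ℂ × ℂ → ℂ := fun p => p.1 * p.2.1
  let u : ℂ × ℂ × ℂ → ℂ := fun p => (a + b) * (p.2.2 - ζ p)
  let E : ℂ × ℂ × ℂ → ℂ := fun p => Complex.exp (u p)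
  let P : ℂ × ℂ × ℂ → ℂ := fun p => Complex.exp (-((a + b) * ζ p * E p))
  let P₁ : ℂ × ℂ × ℂ → ℂ := fun p => -((a + b) * E p) * expQuot (-((a + b) * ζ p * E p))
  let Q : ℂ × ℂ × ℂ → ℂ := fun p => Complex.exp (-((a + b + c) * ζ p * P p))
  let Q₂ : ℂ × ℂ × ℂ → ℂ := fun p => -((a + b + c) * P₁ p) +
    (a + b + c) ^ 2 * P p ^ 2 * expQuot₂ (-((a + b + c) * ζ p * P p))
  have dζ : Differentiable ℂ ζ := by fun_prop
  have du : Differentiable ℂ u := by fun_prop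
  have dE : Differentiable ℂ E := by fun_prop
  have dP : Differentiable ℂ P := by fun_prop
  have dP₁ : Differentiable ℂ P₁ := by fun_prop
  have dQ : Differentiable ℂ Q := by fun_prop
  have dQ₂ : Differentiable ℂ Q₂ := by fun_prop
  have hP (p) : P p = 1 + ζ p * P₁ p := by
    simp only [P, P₁]
    rw [exp_eq_expQuot]; ring
  have hQ (p) : Q p = 1 - (a + b + c) * ζ p + ζ p ^ 2 * Q₂ p := by
    simp only [Q, Q₂]
    rw [exp_eq_expQuot₂]
    linear_combination (-((a + b + c) * ζ p)) * hP p
  refine ⟨fun p => a * (a + b) * expQuot (u p) + a ^ 2 * E p ^ 2 * expQuot₂ (-(a * ζ p * E p)),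
    fun p => -(a * (a + b) * expQuot (u p)),
    fun p => b * (a + b) * expQuot (u p) + b ^ 2 * E p ^ 2 * expQuot₂ (-(b * ζ p * E p)),
    fun p => -(b * (a + b) * expQuot (u p)),
    fun p => Q₂ p - (a + b) * (a + b + c) + (a + b) * ζ p * Q₂ p -
      2 * (a + b) ^ 2 * expQuot₂ (u p) * Q p,
    fun p => (a + b) ^ 2 * expQuot₂ (u p) * Q p,
    fun p => (a + b) * (2 * P₁ p + ζ p * P₁ p ^ 2 + (a + b + c) - ζ p * Q₂ p +
      (a + b) * expQuot₂ (u p) * Q p),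
    by fun_prop, by fun_prop, by fun_prop, by fun_prop, by fun_prop, by fun_prop, by fun_prop,
    fun z t w => ?_⟩
  rw [Fmap_eq a b c z t w (E (z, t, w)) (P (z, t, w)) rfl rfl]
  refine Prod.ext ?_ (Prod.ext ?_ ?_)
  · exact congrArg (z * ·) (exp_component_form a (a + b) (z * t) w)
  · exact congrArg (t * ·) (exp_component_form b (a + b) (z * t) w)
  · exact third_component_form (a + b) c (z * t) w (E (z, t, w)) (expQuot₂ (u (z, t, w)))
      (P (z, t, w)) (P₁ (z, t, w)) (Q (z, t, w)) (Q₂ (z, t, w))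
      (exp_eq_expQuot₂ _) (hP _) (hQ _)
end

section
/- For any nonzero complex numbers a, b, c and any λ ∈ ℂ*, the map F = φ₃ ∘ φ₂⁻¹ ∘ φ₁⁻¹ ∘ φ₂ ∘ φ₁ commutes with the torus action T_λ(z,t,w) = (λz, t/λ, w), i.e. F ∘ T_λ = T_λ ∘ F on ℂ* × ℂ* × ℂ (equivalently, writing F = (F₁,F₂,F₃), one has F₁(λz, t/λ, w) = λ·F₁(z,t,w), F₂(λz, t/λ, w) = F₂(z,t,w)/λ, and F₃(λz, t/λ, w) = F₃(z,t,w)). -/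
/-!
Each of the five factors of `F` commutes with the torus action `T_λ(z,t,w) = (λz, t/λ, w)`,
hence so does their composition. The maps `φ₁`, `φ₁⁻¹` and `φ₃` fix `z` and `t` and change `w`
by a function of `w` and the invariant product `zt`; the maps `φ₂` and `φ₂⁻¹` multiply `z` and
`t` by functions of the invariant coordinate `w`.
-/

open Filter Set

/-- The torus action `T_λ(z,t,w) = (λz, t/λ, w)`. -/
noncomputable def torusAct (lam : ℂ) (p : ℂ × ℂ × ℂ) : ℂ × ℂ × ℂ :=
  (lam * p.1, p.2.1 / lam, p.2.2)

theorem torusAct_mul {lam : ℂ} (hlam : lam ≠ 0) (z t : ℂ) : lam * z * (t / lam) = z * t := by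
  field_simp

theorem φ₁_torusAct {lam : ℂ} (hlam : lam ≠ 0) (p : ℂ × ℂ × ℂ) :
    φ₁ (torusAct lam p) = torusAct lam (φ₁ p) := by
  simp only [φ₁, torusAct, torusAct_mul hlam]

theorem φ₁inv_torusAct {lam : ℂ} (hlam : lam ≠ 0) (p : ℂ × ℂ × ℂ) :
    φ₁inv (torusAct lam p) = torusAct lam (φ₁inv p) := by
  simp only [φ₁inv, torusAct, torusAct_mul hlam]

theorem φ₂_torusAct (a b lam : ℂ) (p : ℂ × ℂ × ℂ) :
    φ₂ a b (torusAct lam p) = torusAct lam (φ₂ a b p) := by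
  simp only [φ₂, torusAct, mul_assoc, div_mul_eq_mul_div]

theorem φ₂inv_torusAct (a b lam : ℂ) (p : ℂ × ℂ × ℂ) :
    φ₂inv a b (torusAct lam p) = torusAct lam (φ₂inv a b p) := by
  simp only [φ₂inv, torusAct, mul_assoc, div_mul_eq_mul_div]

theorem φ₃_torusAct (a b c : ℂ) {lam : ℂ} (hlam : lam ≠ 0) (p : ℂ × ℂ × ℂ) :
    φ₃ a b c (torusAct lam p) = torusAct lam (φ₃ a b c p) := by
  simp only [φ₃, torusAct, mul_assoc (a + b + c), mul_assoc (a + b), ← mul_pow,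
    torusAct_mul hlam]

/-- For nonzero `a, b, c` and any `λ ∈ ℂ*`, the map `F` commutes with the torus
action `T_λ(z,t,w) = (λz, t/λ, w)`:  `F₁(λz, t/λ, w) = λ·F₁(z,t,w)`,
`F₂(λz, t/λ, w) = F₂(z,t,w)/λ` and `F₃(λz, t/λ, w) = F₃(z,t,w)`. -/
theorem Fmap_torus_equivariant (a b c : ℂ) (ha : a ≠ 0) (hb : b ≠ 0) (hc : c ≠ 0)
    (lam : ℂ) (hlam : lam ≠ 0) :
    ∀ z t w : ℂ,
      Fmap a b c (lam * z, t / lam, w) =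
        (lam * (Fmap a b c (z, t, w)).1,
         (Fmap a b c (z, t, w)).2.1 / lam,
         (Fmap a b c (z, t, w)).2.2) := by
  intro z t w
  change Fmap a b c (torusAct lam (z, t, w)) = torusAct lam (Fmap a b c (z, t, w))
  simp only [Fmap, Function.comp_apply, φ₁_torusAct hlam, φ₂_torusAct, φ₁inv_torusAct hlam,
    φ₂inv_torusAct, φ₃_torusAct a b c hlam]
end

section
/- Let a, b, c be nonzero complex numbers and let Ω = {p ∈ ℂ³ \ {0} : F^n(p) → 0} be the basin of attraction of F. Then Ω is invariant under the torus action: if (z, t, w) ∈ Ω and λ ∈ ℂ*, then (λz, t/λ, w) ∈ Ω. -/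
/-!
The torus action `T(z, t, w) = (λz, t/λ, w)` fixes the product `zt` and the coordinate `w`, and
these are the only quantities through which the factors of `F` rescale `z`, `t` or modify `w`.
Hence `T` commutes with `F` (`Fmap_commute_torusAct`), so `F^n (T p) = T (F^n p)`, which tends to
`T 0 = 0` by continuity whenever `F^n p → 0`.
-/

open Filter Set

/-- Each factor of `F` commutes with the torus action, since it only rescales `z` and `t` by
functions of `w`, or changes `w` by a function of `zt` and `w`. -/
theorem Fmap_commute_torusAct (a b c : ℂ) {lam : ℂ} (hlam : lam ≠ 0) :
    Function.Commute (torusAct lam) (Fmap a b c) := by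
  have h1 : Function.Commute (torusAct lam) φ₁ := fun p => by
    ext <;> simp only [torusAct, φ₁]
    field_simp
  have h1' : Function.Commute (torusAct lam) φ₁inv := fun p => by
    ext <;> simp only [torusAct, φ₁inv]
    field_simp
  have h2 : Function.Commute (torusAct lam) (φ₂ a b) := fun p => by
    ext <;> simp only [torusAct, φ₂] <;> ring
  have h2' : Function.Commute (torusAct lam) (φ₂inv a b) := fun p => by
    ext <;> simp only [torusAct, φ₂inv] <;> ring
  have h3 : Function.Commute (torusAct lam) (φ₃ a b c) := fun p => by
    ext <;> simp only [torusAct, φ₃]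
    have e1 : (a + b + c) * (lam * p.1) * (p.2.1 / lam) = (a + b + c) * p.1 * p.2.1 := by
      field_simp
    have e2 : (a + b) * (lam * p.1) ^ 2 * (p.2.1 / lam) ^ 2 = (a + b) * p.1 ^ 2 * p.2.1 ^ 2 := by
      field_simp
    rw [e1, e2]
  exact h3.comp_right (h2'.comp_right (h1'.comp_right (h2.comp_right h1)))

/-- For nonzero `a, b, c`, the basin of attraction `Ω` of `F` is invariant under
the torus action: if `(z,t,w) ∈ Ω` and `λ ∈ ℂ*`, then `(λz, t/λ, w) ∈ Ω`. -/
theorem basinF_torus_invariant (a b c : ℂ) (ha : a ≠ 0) (hb : b ≠ 0) (hc : c ≠ 0)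
    (z t w : ℂ) (hmem : (z, t, w) ∈ basinF a b c) (lam : ℂ) (hlam : lam ≠ 0) :
    (lam * z, t / lam, w) ∈ basinF a b c := by
  obtain ⟨hne, hlim⟩ := hmem
  refine ⟨fun h => hne ?_, ?_⟩
  · simpa [Prod.ext_iff, hlam] using h
  · have hcont : Continuous (torusAct lam) := by unfold torusAct; fun_prop
    have h0 : torusAct lam 0 = 0 := by simp [torusAct]
    have key := (hcont.tendsto 0).comp hlim
    rw [h0] at key
    exact key.congr fun n => (Fmap_commute_torusAct a b c hlam).iterate_right n (z, t, w)
end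

section
/- Let a, b, c be nonzero complex numbers. Every point of the basin of attraction Ω of F avoids the analytic set {zt = 0}: if (z, t, w) ∈ Ω then z·t ≠ 0. -/
open Filter Set

/-- On `{zt = 0}` the shears `φ₁` and `φ₁⁻¹` act trivially, so `φ₂⁻¹` undoes `φ₂`, and `φ₃` acts
trivially as well: this set consists of fixed points of `F`. -/
theorem Fmap_eq_self_of_mul_eq_zero (a b c z t w : ℂ) (h : z * t = 0) :
    Fmap a b c (z, t, w) = (z, t, w) := by
  rcases mul_eq_zero.mp h with rfl | rfl <;>
    simp [Fmap, φ₁, φ₁inv, φ₂, φ₂inv, φ₃, mul_assoc, ← Complex.exp_add]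

/-- For nonzero `a, b, c`, every point of the basin of attraction `Ω` of `F`
avoids the analytic set `{zt = 0}`: if `(z, t, w) ∈ Ω` then `z·t ≠ 0`. -/
theorem basinF_avoids_zt_zero (a b c : ℂ) (ha : a ≠ 0) (hb : b ≠ 0) (hc : c ≠ 0)
    (z t w : ℂ) (hmem : (z, t, w) ∈ basinF a b c) : z * t ≠ 0 := by
  intro h
  obtain ⟨hne, hlim⟩ := hmem
  -- the orbit of a fixed point is constant, so its limit `0` is the point itself
  simp only [Function.iterate_fixed (Fmap_eq_self_of_mul_eq_zero a b c z t w h)] at hlim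
  exact hne (tendsto_nhds_unique tendsto_const_nhds hlim)
end

section
/- For any nonzero complex numbers a, b, c, there exists a holomorphic map G : ℂ² → ℂ² such that π ∘ F = G ∘ π, where π : ℂ³ → ℂ² is defined by π(z, t, w) = (zt, w); explicitly, G(zt, w) = (F₁(z,t,w)·F₂(z,t,w), F₃(z,t,w)) for all (z,t,w) ∈ ℂ³. -/
/-!
The map `F` respects the fibres of `π`: with `u = zt` and `v = w - u`, the last coordinate after
`φ₁⁻¹` is `W = v + u e^{(a+b)v}`, and the exponential factors in `F₁F₂` combine to give
`U = u e^{(a+b)(v-W)}`. Since `φ₃` only involves `zt` and `w`, the third coordinate is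
`F₃ = W e^{-(a+b+c)U} + (a+b)U²`. Both are entire functions of `(u, w)`, so `G = (U, F₃)` works.
-/

open Filter Set

/-- For nonzero `a, b, c`, there exists a holomorphic `G : ℂ² → ℂ²` with
`π ∘ F = G ∘ π`, where `π(z,t,w) = (zt, w)`; explicitly
`G(zt, w) = (F₁·F₂, F₃)(z,t,w)` for all `(z,t,w)`. -/
theorem exists_semiconjugate (a b c : ℂ) (ha : a ≠ 0) (hb : b ≠ 0) (hc : c ≠ 0) :
    ∃ G : ℂ × ℂ → ℂ × ℂ, Differentiable ℂ G ∧
      (∀ p : ℂ × ℂ × ℂ, πmap (Fmap a b c p) = G (πmap p)) ∧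
      (∀ z t w : ℂ,
        G (z * t, w) =
          ((Fmap a b c (z, t, w)).1 * (Fmap a b c (z, t, w)).2.1,
           (Fmap a b c (z, t, w)).2.2)) := by
  let W : ℂ × ℂ → ℂ := fun q => (q.2 - q.1) + q.1 * Complex.exp ((a + b) * (q.2 - q.1))
  let U : ℂ × ℂ → ℂ := fun q => q.1 * Complex.exp ((a + b) * ((q.2 - q.1) - W q))
  let G : ℂ × ℂ → ℂ × ℂ := fun q =>
    (U q, W q * Complex.exp (-((a + b + c) * U q)) + (a + b) * U q ^ 2)
  have hG : ∀ z t w : ℂ, G (z * t, w) =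
      ((Fmap a b c (z, t, w)).1 * (Fmap a b c (z, t, w)).2.1, (Fmap a b c (z, t, w)).2.2) := by
    intro z t w
    -- The products `zt` of the first two coordinates after `φ₂` and after `φ₂⁻¹`.
    have h₂ : ∀ v : ℂ, z * Complex.exp (a * v) * (t * Complex.exp (b * v)) =
        z * t * Complex.exp ((a + b) * v) := by
      intro v
      rw [add_mul, Complex.exp_add]
      ring
    have h₄ : ∀ v s : ℂ, z * Complex.exp (a * v) * Complex.exp (-(a * s)) *
        (t * Complex.exp (b * v) * Complex.exp (-(b * s))) =
        z * t * Complex.exp ((a + b) * (v - s)) := by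
      intro v s
      rw [show (a + b) * (v - s) = a * v + -(a * s) + (b * v + -(b * s)) by ring]
      simp only [Complex.exp_add]
      ring
    simp only [G, U, W, Fmap, φ₁, φ₁inv, φ₂, φ₂inv, φ₃, Function.comp_apply, h₂, h₄,
      mul_assoc (a + b + c), mul_assoc (a + b) (_ ^ 2), ← mul_pow]
  refine ⟨G, ?_, fun p => (hG p.1 p.2.1 p.2.2).symm, hG⟩
  simp only [G, U, W]
  fun_prop
end

section
/- Let a, b, c be nonzero complex numbers and let G : ℂ² → ℂ² be the holomorphic map satisfying π ∘ F = G ∘ π with π(z,t,w) = (zt, w). Then G fixes the line {ζ = 0} pointwise, i.e. G(0, w) = (0, w) for all w ∈ ℂ; consequently, every point (x, y) of the basin Ω̃ = {q ∈ ℂ² \ {0} : G^n(q) → 0} satisfies x ≠ 0. -/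
open Filter Set

/-- For nonzero `a, b, c` and `G` holomorphic with `π ∘ F = G ∘ π`, the map `G`
fixes the line `{ζ = 0}` pointwise; consequently every `(x, y)` in the basin `Ω̃` of `G`
satisfies `x ≠ 0`. -/
theorem semiconjugate_fixes_axis (a b c : ℂ) (ha : a ≠ 0) (hb : b ≠ 0) (hc : c ≠ 0)
    (G : ℂ × ℂ → ℂ × ℂ) (hG : Differentiable ℂ G)
    (hsemi : ∀ p : ℂ × ℂ × ℂ, πmap (Fmap a b c p) = G (πmap p)) :
    (∀ w : ℂ, G (0, w) = (0, w)) ∧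
    (∀ x y : ℂ, (x, y) ∈ basinG G → x ≠ 0) := by
  have hfix : ∀ w : ℂ, G (0, w) = (0, w) := by
    intro w
    have h := hsemi (0, 0, w)
    simpa [πmap, Fmap, φ₁, φ₁inv, φ₂, φ₂inv, φ₃] using h.symm
  refine ⟨hfix, ?_⟩
  rintro x y ⟨hne, hlim⟩ rfl
  -- The orbit of a point of the axis is constant, so its limit `0` is the point itself.
  simp only [Function.iterate_fixed (hfix y)] at hlim
  exact hne (tendsto_nhds_unique tendsto_const_nhds hlim)
end

section
/- Let a = b be positive real numbers and c > 2a a real number. Let Ω = {p ∈ ℂ³ \ {0} : F^n(p) → 0} and Ω̃ = {q ∈ ℂ² \ {0} : G^n(q) → 0} be the basins of attraction of F and of G, where G satisfies π ∘ F = G ∘ π with π(z,t,w) = (zt, w). If φ : Ω̃ → ℂ² is a biholomorphism of Ω̃ onto ℂ² (a bijective holomorphic map with holomorphic inverse), then the map Ψ : Ω → ℂ³ defined by Ψ(z,t,w) = (z, φ(zt, w)) is injective, holomorphic, has holomorphic inverse on its image, and Ψ(Ω) = ℂ* × ℂ²; in particular Ω is biholomorphic to ℂ* × ℂ². -/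
/-!
When `a = b`, the map `F` multiplies the coordinates `z` and `t` by one and the same factor, so the
proportion `z : t` is constant along orbits (`iterate_ratio`). Hence
`zₙ² · t₀ = (zₙ tₙ) · z₀`, and an orbit of `F` with `z₀ t₀ ≠ 0` tends to `0` as soon as its
projection under `π` does. Points with `z t = 0` are fixed by `F`, and points `(0, w)` are fixed by
`G`, so neither basin meets these sets. Together, `Ω` is exactly the set of `(z, t, w)` with `z ≠ 0`
and `(z t, w) ∈ Ω̃` (`mem_basinF_iff`), on which `(z, t, w) ↦ (z, z t, w)` is a biholomorphism
onto `ℂ* × Ω̃`. Composing with `φ` in the last two coordinates gives `Ψ`, with inverse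
`(z, q) ↦ (z, ψ₁(q) / z, ψ₂(q))`.
-/

open Filter Set

/-- For `a = b`, the coordinates `z` and `t` are multiplied by a common factor. -/
lemma Fmap_common_factor (a c : ℂ) (p : ℂ × ℂ × ℂ) :
    ∃ k : ℂ, (Fmap a a c p).1 = p.1 * k ∧ (Fmap a a c p).2.1 = p.2.1 * k := by
  refine ⟨Complex.exp (a * (p.2.2 - p.1 * p.2.1)) *
    Complex.exp (-(a * (φ₁inv (φ₂ a a (φ₁ p))).2.2)), ?_, ?_⟩ <;>
  simp [Fmap, φ₁, φ₁inv, φ₂, φ₂inv, φ₃, mul_assoc]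

lemma Fmap_fixed (a c : ℂ) (p : ℂ × ℂ × ℂ) (h : p.1 * p.2.1 = 0) : Fmap a a c p = p := by
  obtain ⟨z, t, w⟩ := p
  rcases mul_eq_zero.mp h with h | h <;> simp only at h <;> subst h <;>
  simp [Fmap, φ₁, φ₁inv, φ₂, φ₂inv, φ₃, mul_assoc, ← Complex.exp_add]

lemma iterate_ratio (a c : ℂ) (p : ℂ × ℂ × ℂ) (n : ℕ) :
    ((Fmap a a c)^[n] p).1 * p.2.1 = ((Fmap a a c)^[n] p).2.1 * p.1 := by
  induction n with
  | zero => simp [mul_comm]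
  | succ n ih =>
    rw [Function.iterate_succ_apply']
    obtain ⟨k, h1, h2⟩ := Fmap_common_factor a c ((Fmap a a c)^[n] p)
    rw [h1, h2]
    linear_combination k * ih

/-- The orbit of a fixed point is constant, so `0` is the only fixed point whose orbit
tends to `0`. -/
lemma eq_zero_of_fixed_of_tendsto {E : Type*} [TopologicalSpace E] [T2Space E] [Zero E] {f : E → E}
    {x : E} (hf : f x = x) (ht : Tendsto (fun n => f^[n] x) atTop (nhds 0)) : x = 0 := by
  have h : (fun n => f^[n] x) = fun _ : ℕ => x := funext fun n => Function.iterate_fixed hf n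
  rw [h] at ht
  exact tendsto_nhds_unique tendsto_const_nhds ht

lemma fst_ne_zero_of_mem_basinG {a c : ℂ} {G : ℂ × ℂ → ℂ × ℂ}
    (hsemi : ∀ p : ℂ × ℂ × ℂ, πmap (Fmap a a c p) = G (πmap p))
    {q : ℂ × ℂ} (hq : q ∈ basinG G) : q.1 ≠ 0 := by
  intro h
  refine hq.1 (eq_zero_of_fixed_of_tendsto ?_ hq.2)
  have h1 := hsemi (0, 0, q.2)
  rw [Fmap_fixed _ _ _ (by simp)] at h1
  have h2 : πmap (0, 0, q.2) = q := Prod.ext (by simp [πmap, h]) rfl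
  rw [h2] at h1
  exact h1.symm

/-- The basin of `F` is the preimage of the basin of `G` under `π`; the coordinate `z` is then
nonzero, since `Ω̃` misses the line `{0} × ℂ`. -/
lemma mem_basinF_iff {a c : ℂ} {G : ℂ × ℂ → ℂ × ℂ}
    (hsemi : ∀ p : ℂ × ℂ × ℂ, πmap (Fmap a a c p) = G (πmap p)) (p : ℂ × ℂ × ℂ) :
    p ∈ basinF a a c ↔ πmap p ∈ basinG G := by
  have hit : ∀ n, πmap ((Fmap a a c)^[n] p) = G^[n] (πmap p) := fun n =>
    (Function.Semiconj.iterate_right (f := πmap) hsemi n) p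
  constructor
  · rintro ⟨hp, ht⟩
    have hu : p.1 * p.2.1 ≠ 0 := fun h =>
      hp (eq_zero_of_fixed_of_tendsto (Fmap_fixed a c p h) ht)
    refine ⟨fun h => hu (congrArg Prod.fst h), ?_⟩
    have hπ : Continuous πmap := by unfold πmap; fun_prop
    have h := (hπ.tendsto 0).comp ht
    have h0 : πmap 0 = 0 := by simp [πmap]
    rw [h0] at h
    exact h.congr hit
  · intro hq
    have hu : p.1 * p.2.1 ≠ 0 := fst_ne_zero_of_mem_basinG hsemi hq
    have hz : p.1 ≠ 0 := left_ne_zero_of_mul hu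
    have ht : p.2.1 ≠ 0 := right_ne_zero_of_mul hu
    refine ⟨fun h => hz (by simp [h]), ?_⟩
    have hlim : Tendsto (fun n => πmap ((Fmap a a c)^[n] p)) atTop (nhds 0) :=
      hq.2.congr fun n => (hit n).symm
    have hlim_u : Tendsto
        (fun n => ((Fmap a a c)^[n] p).1 * ((Fmap a a c)^[n] p).2.1) atTop (nhds 0) :=
      (continuous_fst.tendsto (0 : ℂ × ℂ)).comp hlim
    have hlim_w : Tendsto (fun n => ((Fmap a a c)^[n] p).2.2) atTop (nhds 0) :=
      Tendsto.comp (f := fun n => πmap ((Fmap a a c)^[n] p))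
        (continuous_snd.tendsto (0 : ℂ × ℂ)) hlim
    have hsq : Tendsto (fun n => ((Fmap a a c)^[n] p).1 ^ 2) atTop (nhds 0) := by
      have h := hlim_u.mul_const (p.1 / p.2.1)
      rw [zero_mul] at h
      refine h.congr fun n => ?_
      have hr := iterate_ratio a c p n
      field_simp
      linear_combination -((Fmap a a c)^[n] p).1 * hr
    have hlim_z : Tendsto (fun n => ((Fmap a a c)^[n] p).1) atTop (nhds 0) := by
      rw [tendsto_zero_iff_norm_tendsto_zero] at hsq ⊢
      have h := (Real.continuous_sqrt.tendsto 0).comp hsq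
      rw [Real.sqrt_zero] at h
      refine h.congr fun n => ?_
      simp
    have hlim_t : Tendsto (fun n => ((Fmap a a c)^[n] p).2.1) atTop (nhds 0) := by
      have h := hlim_z.mul_const (p.2.1 / p.1)
      rw [zero_mul] at h
      refine h.congr fun n => ?_
      have hr := iterate_ratio a c p n
      field_simp
      linear_combination hr
    exact hlim_z.prodMk_nhds (hlim_t.prodMk_nhds hlim_w)

/-- Let `a = b > 0` real and `c > 2a` real, and `G` holomorphic with
`π ∘ F = G ∘ π`. If `φ : Ω̃ → ℂ²` is a biholomorphism onto `ℂ²`, then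
`Ψ(z,t,w) = (z, φ(zt, w))` is injective and holomorphic on `Ω`, has holomorphic inverse
on its image, and `Ψ(Ω) = ℂ* × ℂ²`; in particular `Ω` is biholomorphic to `ℂ* × ℂ²`. -/
theorem basin_biholo_via_psi (a c : ℝ) (ha : 0 < a) (hc : 2 * a < c)
    (G : ℂ × ℂ → ℂ × ℂ) (hG : Differentiable ℂ G)
    (hsemi : ∀ p : ℂ × ℂ × ℂ, πmap (Fmap (a : ℂ) (a : ℂ) (c : ℂ) p) = G (πmap p))
    (φ : ℂ × ℂ → ℂ × ℂ) (hφ : DifferentiableOn ℂ φ (basinG G))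
    (hφbij : Set.BijOn φ (basinG G) Set.univ)
    (ψ : ℂ × ℂ → ℂ × ℂ) (hψ : Differentiable ℂ ψ)
    (hψφ : ∀ q ∈ basinG G, ψ (φ q) = q) (hφψ : ∀ q : ℂ × ℂ, φ (ψ q) = q) :
    Set.InjOn (fun p : ℂ × ℂ × ℂ => (p.1, φ (p.1 * p.2.1, p.2.2)))
      (basinF (a : ℂ) (a : ℂ) (c : ℂ)) ∧
    DifferentiableOn ℂ (fun p : ℂ × ℂ × ℂ => (p.1, φ (p.1 * p.2.1, p.2.2)))
      (basinF (a : ℂ) (a : ℂ) (c : ℂ)) ∧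
    (fun p : ℂ × ℂ × ℂ => ((p.1, φ (p.1 * p.2.1, p.2.2)) : ℂ × ℂ × ℂ)) ''
        basinF (a : ℂ) (a : ℂ) (c : ℂ) = {q : ℂ × ℂ × ℂ | q.1 ≠ 0} ∧
    ∃ Ψinv : ℂ × ℂ × ℂ → ℂ × ℂ × ℂ,
      DifferentiableOn ℂ Ψinv {q : ℂ × ℂ × ℂ | q.1 ≠ 0} ∧
      (∀ p ∈ basinF (a : ℂ) (a : ℂ) (c : ℂ),
        Ψinv (p.1, φ (p.1 * p.2.1, p.2.2)) = p) ∧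
      (∀ q ∈ {q : ℂ × ℂ × ℂ | q.1 ≠ 0},
        ((Ψinv q).1, φ ((Ψinv q).1 * (Ψinv q).2.1, (Ψinv q).2.2)) = q) := by
  have hmem := mem_basinF_iff (a := (a : ℂ)) (c := (c : ℂ)) hsemi
  have hψmem : ∀ q, ψ q ∈ basinG G := by
    intro q
    obtain ⟨x, hx, rfl⟩ := hφbij.surjOn (mem_univ q)
    rw [hψφ x hx]
    exact hx
  have hne : ∀ p ∈ basinF (a : ℂ) (a : ℂ) (c : ℂ), p.1 ≠ 0 := fun p hp =>
    left_ne_zero_of_mul (fst_ne_zero_of_mem_basinG hsemi ((hmem p).1 hp))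
  have hleft : ∀ p ∈ basinF (a : ℂ) (a : ℂ) (c : ℂ),
      ((p.1, (ψ (φ (p.1 * p.2.1, p.2.2))).1 / p.1, (ψ (φ (p.1 * p.2.1, p.2.2))).2) :
        ℂ × ℂ × ℂ) = p := by
    intro p hp
    have h : ψ (φ (p.1 * p.2.1, p.2.2)) = (p.1 * p.2.1, p.2.2) := hψφ _ ((hmem p).1 hp)
    rw [h, mul_div_cancel_left₀ _ (hne p hp)]
  have hright : ∀ q : ℂ × ℂ × ℂ, q.1 ≠ 0 →
      ((q.1, φ (q.1 * ((ψ q.2).1 / q.1), (ψ q.2).2)) : ℂ × ℂ × ℂ) = q := by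
    intro q hq
    rw [mul_div_cancel₀ _ hq, Prod.mk.eta, hφψ]
  refine ⟨?_, ?_, ?_, fun q => (q.1, (ψ q.2).1 / q.1, (ψ q.2).2), ?_, hleft, hright⟩
  · intro p hp p' hp' h
    have h1 : p.1 = p'.1 := (Prod.ext_iff.mp h).1
    have h2 : φ (p.1 * p.2.1, p.2.2) = φ (p'.1 * p'.2.1, p'.2.2) :=
      (Prod.ext_iff.mp h).2
    rw [← hleft p hp, ← hleft p' hp', h2, h1]
  · refine differentiableOn_fst.prodMk (hφ.comp ?_ fun p hp => (hmem p).1 hp)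
    fun_prop
  · ext q
    constructor
    · rintro ⟨p, hp, rfl⟩
      exact hne p hp
    · intro hq
      refine ⟨(q.1, (ψ q.2).1 / q.1, (ψ q.2).2), ?_, hright q hq⟩
      rw [hmem]
      have h : πmap (q.1, (ψ q.2).1 / q.1, (ψ q.2).2) = ψ q.2 :=
        Prod.ext (mul_div_cancel₀ _ hq) rfl
      rw [h]
      exact hψmem _
  · have h : Differentiable ℂ fun q : ℂ × ℂ × ℂ => ψ q.2 := hψ.comp differentiable_snd
    have hdiv : DifferentiableOn ℂ (fun q : ℂ × ℂ × ℂ => (ψ q.2).1 / q.1) {q | q.1 ≠ 0} := by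
      simp only [div_eq_mul_inv]
      exact h.fst.differentiableOn.fun_mul (differentiableOn_fst.fun_inv fun _ hq => hq)
    exact differentiableOn_fst.prodMk (hdiv.prodMk h.snd.differentiableOn)
end
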